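/- arXiv:2404.01333 — 5 statements merged into one kernel-verified Lean document; each statement's English description precedes it below -/
import Mathlib

section
/- Let (U_t)_{t∈ℝ} be a strongly continuous one-parameter unitary group on a complex Hilbert space H (U_{s+t} = U_s U_t, U_0 = 1, and t ↦ U_t x is continuous for every x ∈ H). Define D_A = {φ ∈ H : the limit lim_{ε→0} (U_ε φ − φ)/(iε) exists} and A φ = −i lim_{ε→0} (U_ε φ − φ)/ε for φ ∈ D_A. Then D_A is a dense subspace of H, the unbounded operator A with domain D_A is self-adjoint, each U_t maps D_A into D_A, and for φ ∈ D_A the map t ↦ U_t φ is differentiable with derivative (d/dt) U_t φ = i A U_t φ. -/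
open scoped InnerProductSpace

/-!
Orbit integrals `∫ s in a..b, U s x` lie in the domain of the infinitesimal generator `G`, which
sends them to `U b x - U a x`. Averaging over short intervals gives density of the domain.
Differentiating `⟪U t φ, U t χ⟫ = ⟪φ, χ⟫` gives `-G ≤ G†`. Conversely, if `G† y = w`, testing
this relation against orbit integrals yields `U t y = y - ∫ s in 0..t, U s w`, so `G y = -w`.
Hence `G† = -G`, and `A = -i G` is self-adjoint.
-/

open Filter Topology LinearPMap ComplexConjugate

section Adjoint

variable {𝕜 E F : Type*} [RCLike 𝕜] [NormedAddCommGroup E] [InnerProductSpace 𝕜 E]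
  [NormedAddCommGroup F] [InnerProductSpace 𝕜 F] [CompleteSpace E]

theorem adjoint_smul_of_dense {T : E →ₗ.[𝕜] F} (hT : Dense (T.domain : Set E)) {c : 𝕜}
    (hc : c ≠ 0) : (c • T)† = conj c • T† := by
  have hdomain (y : F) : y ∈ (c • T)†.domain ↔ y ∈ T†.domain :=
    (continuous_congr fun x : T.domain ↦ inner_smul_right y (T x) c).trans
      (continuous_const_smul_iff₀ hc)
  refine LinearPMap.ext (Submodule.ext hdomain) fun y hy hy' ↦
    adjoint_apply_eq (T := c • T) hT _ fun x ↦ ?_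
  simpa [inner_smul_left, inner_smul_right] using
    congrArg (c * ·) (adjoint_isFormalAdjoint hT ⟨y, hy'⟩ x)

end Adjoint

section Generator

variable {𝕜 E : Type*} [RCLike 𝕜] [NormedAddCommGroup E] [NormedSpace 𝕜 E] [NormedSpace ℝ E]
  {U : ℝ → E →L[𝕜] E}

theorem hasDerivAt_orbit_iff (hgrp : ∀ s t : ℝ, U (s + t) = U s * U t) {t : ℝ} {φ ψ : E} :
    HasDerivAt (fun s ↦ U s φ) ψ t ↔ HasDerivAt (fun s ↦ U s (U t φ)) ψ 0 := by
  have hshift : (fun s ↦ U s (U t φ)) = fun s ↦ U (s + t) φ := by simp [hgrp]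
  rw [hshift]
  refine ⟨fun h ↦ .comp_add_const 0 t (by rwa [zero_add]), fun h ↦ ?_⟩
  have hback : HasDerivAt (fun s ↦ U (s + t) φ) ψ (t - t) := by rwa [sub_self]
  simpa only [sub_add_cancel] using hback.comp_sub_const t t

theorem apply_intervalIntegral_orbit [CompleteSpace E] (hgrp : ∀ s t : ℝ, U (s + t) = U s * U t)
    (hcont : ∀ x : E, Continuous fun t : ℝ ↦ U t x) (x : E) (a b t : ℝ) :
    U t (∫ s in a..b, U s x) = ∫ s in (t + a)..(t + b), U s x := by
  rw [← (U t).intervalIntegral_comp_comm ((hcont x).intervalIntegrable a b),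
    ← intervalIntegral.integral_comp_add_left (fun s ↦ U s x) t]
  simp [hgrp]

theorem hasDerivAt_apply_intervalIntegral_orbit [CompleteSpace E]
    (hgrp : ∀ s t : ℝ, U (s + t) = U s * U t)
    (hcont : ∀ x : E, Continuous fun t : ℝ ↦ U t x) (x : E) (a b : ℝ) :
    HasDerivAt (fun t ↦ U t (∫ s in a..b, U s x)) (U b x - U a x) 0 := by
  have hprim (c : ℝ) : HasDerivAt (fun t ↦ ∫ s in (0 : ℝ)..(t + c), U s x) (U c x) 0 := by
    simpa using ((hcont x).integral_hasStrictDerivAt 0 (0 + c)).hasDerivAt.comp_add_const 0 c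
  refine ((hprim b).sub (hprim a)).congr_of_eventuallyEq (.of_forall fun t ↦ ?_)
  have hint (c d : ℝ) := (hcont x).intervalIntegrable (μ := MeasureTheory.volume) c d
  simp only [apply_intervalIntegral_orbit hgrp hcont, Pi.sub_apply,
    intervalIntegral.integral_interval_sub_left (hint _ _) (hint _ _)]

variable [IsScalarTower ℝ 𝕜 E]

theorem hasDerivAt_orbit_map (hgrp : ∀ s t : ℝ, U (s + t) = U s * U t) {φ ψ : E}
    (h : HasDerivAt (fun s ↦ U s φ) ψ 0) (t : ℝ) :
    HasDerivAt (fun s ↦ U s (U t φ)) (U t ψ) 0 := by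
  have hcomm (s : ℝ) : U s (U t φ) = U t (U s φ) := by
    simpa [hgrp] using congrArg (fun r ↦ U r φ) (add_comm s t)
  simpa only [hcomm] using!
    ((U t).restrictScalars ℝ).hasFDerivAt.comp_hasDerivAt 0 h

theorem tendsto_inv_smul_sub_iff_hasDerivAt (hzero : U 0 = 1) {φ ψ : E} :
    Tendsto (fun ε : ℝ ↦ (ε : 𝕜)⁻¹ • (U ε φ - φ)) (𝓝[≠] 0) (𝓝 ψ) ↔
      HasDerivAt (fun t ↦ U t φ) ψ 0 := by
  simp only [hasDerivAt_iff_tendsto_slope_zero, zero_add, hzero, one_apply_eq_self,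
    RCLike.real_smul_eq_coe_smul (K := 𝕜), RCLike.ofReal_inv]

/-- The infinitesimal generator of a one-parameter group `U`: the derivative of `t ↦ U t φ` at `0`,
defined for those `φ` at which this derivative exists. -/
noncomputable def groupGenerator (U : ℝ → E →L[𝕜] E) : E →ₗ.[𝕜] E where
  domain :=
    { carrier := {φ | DifferentiableAt ℝ (fun t ↦ U t φ) 0}
      add_mem' := fun hφ hχ ↦ by simpa using DifferentiableAt.fun_add hφ hχ
      zero_mem' := by simp
      smul_mem' := fun c _ hφ ↦ by simpa using DifferentiableAt.fun_const_smul hφ c }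
  toFun :=
    { toFun := fun φ ↦ deriv (fun t ↦ U t (φ : E)) 0
      map_add' := fun φ χ ↦ by simpa using deriv_fun_add φ.2 χ.2
      map_smul' := fun c φ ↦ by simpa using deriv_fun_const_smul c φ.2 }

theorem hasDerivAt_groupGenerator (φ : (groupGenerator U).domain) :
    HasDerivAt (fun t ↦ U t (φ : E)) (groupGenerator U φ) 0 :=
  DifferentiableAt.hasDerivAt φ.2

theorem mem_groupGenerator_domain_iff {φ : E} :
    φ ∈ (groupGenerator U).domain ↔ ∃ ψ, HasDerivAt (fun t ↦ U t φ) ψ 0 :=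
  ⟨fun h ↦ ⟨_, h.hasDerivAt⟩, fun ⟨_, h⟩ ↦ h.differentiableAt⟩

theorem dense_groupGenerator_domain [CompleteSpace E]
    (hgrp : ∀ s t : ℝ, U (s + t) = U s * U t)
    (hzero : U 0 = 1) (hcont : ∀ x : E, Continuous fun t : ℝ ↦ U t x) :
    Dense ((groupGenerator U).domain : Set E) := by
  intro x
  have haverage : Tendsto (fun ε : ℝ ↦ (ε : 𝕜)⁻¹ • ∫ s in (0 : ℝ)..ε, U s x) (𝓝[≠] 0) (𝓝 x) := by
    simpa [hzero, RCLike.real_smul_eq_coe_smul (K := 𝕜)] using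
      ((hcont x).integral_hasStrictDerivAt 0 0).hasDerivAt.tendsto_slope_zero
  exact mem_closure_of_tendsto haverage <| .of_forall fun ε ↦ Submodule.smul_mem _ _
    (hasDerivAt_apply_intervalIntegral_orbit hgrp hcont x 0 ε).differentiableAt

end Generator

section Unitary

variable {𝕜 H : Type*} [RCLike 𝕜] [NormedAddCommGroup H] [InnerProductSpace 𝕜 H]
  {U : ℝ → H →L[𝕜] H}

theorem inner_apply_left_eq_inner_apply_neg (hgrp : ∀ s t : ℝ, U (s + t) = U s * U t)
    (hzero : U 0 = 1) (hunitary : ∀ (t : ℝ) (x y : H), ⟪U t x, U t y⟫_𝕜 = ⟪x, y⟫_𝕜)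
    (t : ℝ) (x y : H) : ⟪U t x, y⟫_𝕜 = ⟪x, U (-t) y⟫_𝕜 := by
  have hinv : U t (U (-t) y) = y := by
    simpa [hzero] using congrArg (fun L : H →L[𝕜] H ↦ L y) (hgrp t (-t)).symm
  rw [← hunitary t x, hinv]

theorem inner_intervalIntegral_orbit_left [NormedSpace ℝ H] [CompleteSpace H]
    (hgrp : ∀ s t : ℝ, U (s + t) = U s * U t) (hzero : U 0 = 1)
    (hunitary : ∀ (t : ℝ) (x y : H), ⟪U t x, U t y⟫_𝕜 = ⟪x, y⟫_𝕜)
    (hcont : ∀ x : H, Continuous fun t : ℝ ↦ U t x) (x y : H) (a b : ℝ) :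
    ⟪∫ s in a..b, U s x, y⟫_𝕜 = ⟪x, ∫ s in -b..-a, U s y⟫_𝕜 := by
  have inner_right (u v : H) (c d : ℝ) : ⟪u, ∫ s in c..d, U s v⟫_𝕜 = ∫ s in c..d, ⟪u, U s v⟫_𝕜 :=
    ((innerSL 𝕜 u).intervalIntegral_comp_comm ((hcont v).intervalIntegrable c d)).symm
  calc ⟪∫ s in a..b, U s x, y⟫_𝕜
      = conj (∫ s in a..b, ⟪y, U s x⟫_𝕜) := by rw [← inner_right, inner_conj_symm]
    _ = ∫ s in a..b, ⟪U s x, y⟫_𝕜 := by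
      simp only [← intervalIntegral.intervalIntegral_conj, inner_conj_symm]
    _ = ∫ s in a..b, ⟪x, U (-s) y⟫_𝕜 := by
      simp only [inner_apply_left_eq_inner_apply_neg hgrp hzero hunitary]
    _ = ∫ s in -b..-a, ⟪x, U s y⟫_𝕜 := intervalIntegral.integral_comp_neg (fun s ↦ ⟪x, U s y⟫_𝕜)
    _ = ⟪x, ∫ s in -b..-a, U s y⟫_𝕜 := (inner_right x y (-b) (-a)).symm

variable [NormedSpace ℝ H] [IsScalarTower ℝ 𝕜 H]

theorem isFormalAdjoint_neg_groupGenerator (hzero : U 0 = 1)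
    (hunitary : ∀ (t : ℝ) (x y : H), ⟪U t x, U t y⟫_𝕜 = ⟪x, y⟫_𝕜) :
    (groupGenerator U).IsFormalAdjoint (-groupGenerator U) := by
  intro φ χ
  have hderiv := (hasDerivAt_groupGenerator φ).inner 𝕜 (hasDerivAt_groupGenerator χ)
  simp only [hunitary, hzero, one_apply_eq_self] at hderiv
  rw [LinearPMap.neg_apply, inner_neg_right]
  exact eq_neg_of_add_eq_zero_right (hderiv.unique (hasDerivAt_const _ _))

variable [CompleteSpace H]

theorem apply_eq_sub_intervalIntegral_orbit (hgrp : ∀ s t : ℝ, U (s + t) = U s * U t)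
    (hzero : U 0 = 1) (hunitary : ∀ (t : ℝ) (x y : H), ⟪U t x, U t y⟫_𝕜 = ⟪x, y⟫_𝕜)
    (hcont : ∀ x : H, Continuous fun t : ℝ ↦ U t x) {y w : H}
    (hyw : ∀ φ : (groupGenerator U).domain, ⟪w, φ⟫_𝕜 = ⟪y, groupGenerator U φ⟫_𝕜) (t : ℝ) :
    U t y = y - ∫ s in (0 : ℝ)..t, U s w := by
  suffices U t y - y = ∫ s in t..0, U s w by
    rw [intervalIntegral.integral_symm, sub_neg_eq_add, ← this, add_sub_cancel]
  refine ext_inner_right 𝕜 fun x ↦ ?_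
  have hderiv := hasDerivAt_apply_intervalIntegral_orbit hgrp hcont x 0 (-t)
  let φ : (groupGenerator U).domain := ⟨∫ s in (0 : ℝ)..-t, U s x, hderiv.differentiableAt⟩
  have hφ : groupGenerator U φ = U (-t) x - x := by
    simpa [hzero] using (hasDerivAt_groupGenerator φ).unique hderiv
  calc ⟪U t y - y, x⟫_𝕜
      = ⟪y, groupGenerator U φ⟫_𝕜 := by
        rw [hφ, inner_sub_left, inner_sub_right,
          inner_apply_left_eq_inner_apply_neg hgrp hzero hunitary]
    _ = ⟪w, ∫ s in (0 : ℝ)..-t, U s x⟫_𝕜 := (hyw φ).symm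
    _ = ⟪∫ s in t..0, U s w, x⟫_𝕜 := by
        rw [inner_intervalIntegral_orbit_left hgrp hzero hunitary hcont, neg_zero]

theorem adjoint_groupGenerator (hgrp : ∀ s t : ℝ, U (s + t) = U s * U t) (hzero : U 0 = 1)
    (hunitary : ∀ (t : ℝ) (x y : H), ⟪U t x, U t y⟫_𝕜 = ⟪x, y⟫_𝕜)
    (hcont : ∀ x : H, Continuous fun t : ℝ ↦ U t x) :
    (groupGenerator U)† = -groupGenerator U := by
  have hdense := dense_groupGenerator_domain hgrp hzero hcont
  have hderiv (y : (groupGenerator U)†.domain) :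
      HasDerivAt (fun t ↦ U t (y : H)) (-(groupGenerator U)† y) 0 := by
    have horbit := apply_eq_sub_intervalIntegral_orbit hgrp hzero hunitary hcont
      (adjoint_isFormalAdjoint hdense y)
    simpa [← horbit, hzero] using
      ((hcont ((groupGenerator U)† y)).integral_hasStrictDerivAt 0 0).hasDerivAt.const_sub (y : H)
  refine le_antisymm ?_ ((isFormalAdjoint_neg_groupGenerator hzero hunitary).le_adjoint hdense)
  refine ⟨fun y hy ↦ (hderiv ⟨y, hy⟩).differentiableAt, fun y z hyz ↦ ?_⟩
  rw [LinearPMap.neg_apply, ← neg_eq_iff_eq_neg]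
  exact (hderiv y).unique (hyz ▸ hasDerivAt_groupGenerator z)

end Unitary

theorem isSelfAdjoint_neg_I_smul_groupGenerator {H : Type*} [NormedAddCommGroup H]
    [InnerProductSpace ℂ H] [CompleteSpace H] {U : ℝ → H →L[ℂ] H}
    (hgrp : ∀ s t : ℝ, U (s + t) = U s * U t) (hzero : U 0 = 1)
    (hunitary : ∀ (t : ℝ) (x y : H), ⟪U t x, U t y⟫_ℂ = ⟪x, y⟫_ℂ)
    (hcont : ∀ x : H, Continuous fun t : ℝ ↦ U t x) :
    IsSelfAdjoint (-Complex.I • groupGenerator U) := by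
  rw [isSelfAdjoint_def,
    adjoint_smul_of_dense (dense_groupGenerator_domain hgrp hzero hcont)
      (neg_ne_zero.mpr Complex.I_ne_zero),
    adjoint_groupGenerator hgrp hzero hunitary hcont]
  exact LinearPMap.ext' (by ext; simp)

theorem stone_theorem_general {H : Type*} [NormedAddCommGroup H] [InnerProductSpace ℂ H]
    [CompleteSpace H] (U : ℝ → H →L[ℂ] H)
    (hgrp : ∀ s t : ℝ, U (s + t) = U s * U t) (hzero : U 0 = 1)
    (hunitary : ∀ (t : ℝ) (x y : H), ⟪U t x, U t y⟫_ℂ = ⟪x, y⟫_ℂ)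
    (hcont : ∀ x : H, Continuous fun t : ℝ ↦ U t x) :
    ∃ T : H →ₗ.[ℂ] H,
      (T.domain : Set H) =
        {φ : H | ∃ ψ : H, Tendsto (fun ε : ℝ ↦ (ε : ℂ)⁻¹ • (U ε φ - φ)) (𝓝[≠] 0) (𝓝 ψ)} ∧
      Dense (T.domain : Set H) ∧
      IsSelfAdjoint T ∧
      (∀ (φ : H) (hφ : φ ∈ T.domain),
        Tendsto (fun ε : ℝ ↦ (ε : ℂ)⁻¹ • (U ε φ - φ)) (𝓝[≠] 0) (𝓝 (Complex.I • T ⟨φ, hφ⟩))) ∧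
      (∀ (t : ℝ) (φ : H), φ ∈ T.domain → U t φ ∈ T.domain) ∧
      (∀ (φ : H) (_ : φ ∈ T.domain) (t : ℝ) (ht : U t φ ∈ T.domain),
        HasDerivAt (fun s : ℝ ↦ U s φ) (Complex.I • T ⟨U t φ, ht⟩) t) := by
  have hI (φ : (groupGenerator U).domain) :
      Complex.I • (-Complex.I • groupGenerator U) φ = groupGenerator U φ := by simp [smul_smul]
  refine ⟨-Complex.I • groupGenerator U, ?_, dense_groupGenerator_domain hgrp hzero hcont,
    isSelfAdjoint_neg_I_smul_groupGenerator hgrp hzero hunitary hcont, fun φ hφ ↦ ?_,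
    fun t φ hφ ↦ ?_, fun φ _ t ht ↦ ?_⟩
  · ext φ
    exact mem_groupGenerator_domain_iff.trans
      (exists_congr fun ψ ↦ (tendsto_inv_smul_sub_iff_hasDerivAt hzero).symm)
  · exact (tendsto_inv_smul_sub_iff_hasDerivAt hzero).mpr
      (hI ⟨φ, hφ⟩ ▸ hasDerivAt_groupGenerator ⟨φ, hφ⟩)
  · exact (hasDerivAt_orbit_map hgrp (hasDerivAt_groupGenerator ⟨φ, hφ⟩) t).differentiableAt
  · exact (hasDerivAt_orbit_iff hgrp).mpr (hI ⟨U t φ, ht⟩ ▸ hasDerivAt_groupGenerator ⟨U t φ, ht⟩)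

/-- **Stone's theorem on one-parameter unitary groups**: a strongly continuous one-parameter
unitary group `(U_t)` on a complex Hilbert space has a densely defined self-adjoint generator
`A` with domain `D_A = {φ : lim_{ε→0} (U_ε φ - φ)/(iε) exists}`, `A φ = -i lim (U_ε φ - φ)/ε`
(equivalently the limit equals `i A φ`), each `U_t` preserves `D_A`, and on `D_A` the map
`t ↦ U_t φ` is differentiable with derivative `i A U_t φ`. -/
theorem stone_theorem {H : Type} [NormedAddCommGroup H] [InnerProductSpace ℂ H]
    [CompleteSpace H]
    (U : ℝ → H →L[ℂ] H)
    (hgrp : ∀ s t : ℝ, U (s + t) = U s * U t) (hzero : U 0 = 1)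
    (hunitary : ∀ (t : ℝ) (x y : H), ⟪U t x, U t y⟫_ℂ = ⟪x, y⟫_ℂ)
    (hcont : ∀ x : H, Continuous fun t : ℝ => U t x) :
    ∃ T : H →ₗ.[ℂ] H,
      (T.domain : Set H) =
        {φ : H | ∃ ψ : H, Filter.Tendsto (fun ε : ℝ => (ε : ℂ)⁻¹ • (U ε φ - φ))
          (nhdsWithin (0 : ℝ) {0}ᶜ) (nhds ψ)} ∧
      Dense (T.domain : Set H) ∧
      IsSelfAdjoint T ∧
      (∀ (φ : H) (hφ : φ ∈ T.domain),
        Filter.Tendsto (fun ε : ℝ => (ε : ℂ)⁻¹ • (U ε φ - φ)) (nhdsWithin (0 : ℝ) {0}ᶜ)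
          (nhds (Complex.I • T ⟨φ, hφ⟩))) ∧
      (∀ (t : ℝ) (φ : H), φ ∈ T.domain → U t φ ∈ T.domain) ∧
      (∀ (φ : H) (_ : φ ∈ T.domain) (t : ℝ) (ht : U t φ ∈ T.domain),
        HasDerivAt (fun s : ℝ => U s φ) (Complex.I • T ⟨U t φ, ht⟩) t) :=
  stone_theorem_general U hgrp hzero hunitary hcont
end

section
/- Let A be a commutative unital C*-algebra, τ : ℝ → Aut(A) a one-parameter group of *-automorphisms, β ∈ ℝ with β ≠ 0, and φ a faithful (τ, β)-KMS state on A (faithful meaning φ(a*a) > 0 for all a ≠ 0). Then the automorphism group τ is trivial: τ_t(a) = a for all a ∈ A and t ∈ ℝ. -/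
open scoped ComplexOrder

/-- The open horizontal strip `D_β` between the real axis and the line `Im z = β`. -/
def kmsStrip (β : ℝ) : Set ℂ := {z : ℂ | z.im ∈ Set.Ioo (min 0 β) (max 0 β)}

/-- The KMS condition for a functional `φ`, a one-parameter family `τ` of maps and `β`. -/
def SatisfiesKMSCondition {A : Type} [NormedRing A] [NormedAlgebra ℂ A]
    (φ : A →L[ℂ] ℂ) (τ : ℝ → A → A) (β : ℝ) : Prop :=
  ∀ a b : A, ∃ F : ℂ → ℂ,
    ContinuousOn F (closure (kmsStrip β)) ∧
    (∃ C : ℝ, ∀ z ∈ closure (kmsStrip β), ‖F z‖ ≤ C) ∧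
    DifferentiableOn ℂ F (kmsStrip β) ∧
    (∀ t : ℝ, F t = φ (a * τ t b)) ∧
    (∀ t : ℝ, F (t + β * Complex.I) = φ (τ t b * a))

/-!
Tracial symmetry makes the two boundary values of `F_{a,b}` agree along the strip, so `F_{a,b}`
extends to a bounded `iβ`-periodic function on `ℂ`. It is holomorphic across the boundary lines
by Morera's theorem, a rectangle crossing such a line being cut along it, and hence constant by
Liouville's theorem. Thus `φ (a * (τ t b - b)) = 0` for every `a`, and faithfulness gives
`τ t b = b`.
-/

section PainleveRemovability

open Complex MeasureTheory Set
open scoped Interval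

variable {E : Type*} [NormedAddCommGroup E] [NormedSpace ℂ E] {f : ℂ → E}

theorem wedgeIntegral_eq_neg_of_split_im {z w : ℂ} {c : ℝ} (hc : c ∈ [[z.im, w.im]])
    (hf : ContinuousOn f (Rectangle z w))
    (h₁ : wedgeIntegral z ⟨w.re, c⟩ f = -wedgeIntegral ⟨w.re, c⟩ z f)
    (h₂ : wedgeIntegral ⟨z.re, c⟩ w f = -wedgeIntegral w ⟨z.re, c⟩ f) :
    wedgeIntegral z w f = -wedgeIntegral w z f := by
  have vertical_split (x : ℝ) (hx : x ∈ [[z.re, w.re]]) :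
      (∫ y in z.im..c, f (x + y * I)) + ∫ y in c..w.im, f (x + y * I) =
        ∫ y in z.im..w.im, f (x + y * I) := by
    have hcont : ContinuousOn (fun y : ℝ ↦ f (x + y * I)) [[z.im, w.im]] :=
      hf.comp (by fun_prop) fun y hy ↦ by simpa [Rectangle, mem_reProdIm] using ⟨hx, hy⟩
    exact intervalIntegral.integral_add_adjacent_intervals
      (hcont.mono (uIcc_subset_uIcc_left hc)).intervalIntegrable
      (hcont.mono (uIcc_subset_uIcc_right hc)).intervalIntegrable
  rw [← add_eq_zero_iff_eq_neg, wedgeIntegral_add_wedgeIntegral_eq] at h₁ h₂ ⊢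
  rw [← vertical_split z.re left_mem_uIcc, ← vertical_split w.re right_mem_uIcc]
  linear_combination (norm := module) h₁ + h₂

theorem wedgeIntegral_eq_neg_of_differentiableOn_diff {U : Set ℂ} {c : ℝ}
    (hf : ContinuousOn f U) (hd : DifferentiableOn ℂ f (U \ im ⁻¹' {c})) {z w : ℂ}
    (hzw : Rectangle z w ⊆ U) (hc : c ∉ Ioo (min z.im w.im) (max z.im w.im)) :
    wedgeIntegral z w f = -wedgeIntegral w z f := by
  rw [← add_eq_zero_iff_eq_neg, wedgeIntegral_add_wedgeIntegral_eq]
  refine integral_boundary_rect_eq_zero_of_continuousOn_of_differentiableOn f z w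
    (hf.mono hzw) (hd.mono fun u hu ↦ ⟨hzw ?_, ?_⟩)
  · exact ⟨Ioo_subset_Icc_self hu.1, Ioo_subset_Icc_self hu.2⟩
  · rintro rfl
    exact hc hu.2

theorem isConservativeOn_of_differentiableOn_diff {U : Set ℂ} {c : ℝ}
    (hf : ContinuousOn f U) (hd : DifferentiableOn ℂ f (U \ im ⁻¹' {c})) :
    IsConservativeOn f U := by
  intro z w hzw
  by_cases hc : c ∈ [[z.im, w.im]]
  · have lower_subset : Rectangle z ⟨w.re, c⟩ ⊆ Rectangle z w :=
      reProdIm_subset_iff.2 (prod_mono_right (uIcc_subset_uIcc_left hc))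
    have upper_subset : Rectangle ⟨z.re, c⟩ w ⊆ Rectangle z w :=
      reProdIm_subset_iff.2 (prod_mono_right (uIcc_subset_uIcc_right hc))
    refine wedgeIntegral_eq_neg_of_split_im hc (hf.mono hzw) ?_ ?_
    · exact wedgeIntegral_eq_neg_of_differentiableOn_diff hf hd (lower_subset.trans hzw)
        (by simpa using le_of_lt)
    · exact wedgeIntegral_eq_neg_of_differentiableOn_diff hf hd (upper_subset.trans hzw)
        (by simpa using le_of_lt)
  · exact wedgeIntegral_eq_neg_of_differentiableOn_diff hf hd hzw fun h ↦ hc (Ioo_subset_Icc_self h)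

theorem differentiableOn_of_differentiableOn_diff_im_preimage_singleton [CompleteSpace E]
    {U : Set ℂ} (hU : IsOpen U) {c : ℝ} (hf : ContinuousOn f U)
    (hd : DifferentiableOn ℂ f (U \ im ⁻¹' {c})) : DifferentiableOn ℂ f U :=
  (isConservativeOn_and_continuousOn_iff_isDifferentiableOn hU).1
    ⟨isConservativeOn_of_differentiableOn_diff hf hd, hf⟩

end PainleveRemovability

section ImPeriodize

open Complex Set

/-- The `I`-periodic extension to the whole plane of the restriction of `f` to the half-open strip
`0 ≤ Im z < 1`. -/
noncomputable def imPeriodize {E : Type*} (f : ℂ → E) (z : ℂ) : E :=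
  f (z.re + Int.fract z.im * I)

variable {E : Type*} {f : ℂ → E}

theorem imPeriodize_eq_apply_sub_floor (z : ℂ) : imPeriodize f z = f (z - ⌊z.im⌋ * I) := by
  unfold imPeriodize
  congr 1
  apply Complex.ext <;> simp

theorem imPeriodize_ofReal (t : ℝ) : imPeriodize f t = f t := by
  simp [imPeriodize]

theorem range_imPeriodize_subset : range (imPeriodize f) ⊆ f '' (im ⁻¹' Ico 0 1) := by
  rintro _ ⟨z, rfl⟩
  exact ⟨z.re + Int.fract z.im * I, by simp [Int.fract_lt_one], rfl⟩

theorem continuous_imPeriodize [TopologicalSpace E] (hf : ContinuousOn f (im ⁻¹' Icc 0 1))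
    (hper : ∀ t : ℝ, f t = f (t + I)) : Continuous (imPeriodize f) := by
  refine ContinuousOn.comp_fract (f := fun (z : ℂ) (y : ℝ) ↦ f (z.re + y * I)) ?_ continuous_im
    fun z ↦ by simpa using hper z.re
  exact hf.comp (f := fun p : ℂ × ℝ ↦ (p.1.re + p.2 * I : ℂ)) (by fun_prop)
    fun p hp ↦ by simpa using hp.2

variable [NormedAddCommGroup E] [NormedSpace ℂ E]

theorem differentiableOn_imPeriodize (hf : DifferentiableOn ℂ f (im ⁻¹' Ioo 0 1)) (n : ℤ) :
    DifferentiableOn ℂ (imPeriodize f) (im ⁻¹' Ioo (n : ℝ) (n + 1)) := by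
  have hshift : DifferentiableOn ℂ (fun z ↦ f (z - n * I)) (im ⁻¹' Ioo (n : ℝ) (n + 1)) :=
    hf.comp (by fun_prop) fun z hz ↦ by simpa [sub_lt_iff_lt_add'] using hz
  refine hshift.congr fun z hz ↦ ?_
  rw [imPeriodize_eq_apply_sub_floor, Int.floor_eq_iff.2 ⟨hz.1.le, hz.2⟩]

theorem differentiableAt_imPeriodize (hf : DifferentiableOn ℂ f (im ⁻¹' Ioo 0 1)) {z : ℂ}
    (hz : Int.fract z.im ≠ 0) : DifferentiableAt ℂ (imPeriodize f) z := by
  have hmem : z ∈ im ⁻¹' Ioo (⌊z.im⌋ : ℝ) (⌊z.im⌋ + 1) :=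
    ⟨sub_pos.1 (Int.fract_pos.2 (sub_ne_zero.1 hz)), Int.lt_floor_add_one _⟩
  exact (differentiableOn_imPeriodize hf ⌊z.im⌋).differentiableAt
    ((isOpen_Ioo.preimage continuous_im).mem_nhds hmem)

theorem differentiable_imPeriodize [CompleteSpace E] (hf : DiffContOnCl ℂ f (im ⁻¹' Ioo 0 1))
    (hper : ∀ t : ℝ, f t = f (t + I)) : Differentiable ℂ (imPeriodize f) := by
  intro z
  set n : ℤ := ⌊z.im⌋
  have hU : IsOpen (im ⁻¹' Ioo (n - 1 : ℝ) (n + 1)) := isOpen_Ioo.preimage continuous_im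
  have hzU : z ∈ im ⁻¹' Ioo (n - 1 : ℝ) (n + 1) :=
    ⟨(sub_one_lt _).trans_le (Int.floor_le _), Int.lt_floor_add_one _⟩
  have hcont : Continuous (imPeriodize f) := by
    refine continuous_imPeriodize ?_ hper
    simpa only [closure_preimage_im, closure_Ioo zero_ne_one] using hf.continuousOn
  have hoff : DifferentiableOn ℂ (imPeriodize f)
      (im ⁻¹' Ioo (n - 1 : ℝ) (n + 1) \ im ⁻¹' {(n : ℝ)}) := by
    rintro w ⟨⟨hlt, hgt⟩, hne⟩
    refine (differentiableAt_imPeriodize hf.differentiableOn fun h ↦ hne ?_).differentiableWithinAt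
    obtain ⟨m, hm⟩ := Int.fract_eq_zero_iff.1 h
    rw [← hm] at hlt hgt
    have hnm : n - 1 < m := by exact_mod_cast hlt
    have hmn : m < n + 1 := by exact_mod_cast hgt
    simp [← hm, show m = n by lia]
  exact (differentiableOn_of_differentiableOn_diff_im_preimage_singleton hU hcont.continuousOn
    hoff).differentiableAt (hU.mem_nhds hzU)

theorem apply_ofReal_eq_of_isBounded_unit_strip [CompleteSpace E]
    (hf : DiffContOnCl ℂ f (im ⁻¹' Ioo 0 1))
    (hbdd : Bornology.IsBounded (f '' (im ⁻¹' Ioo 0 1)))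
    (hper : ∀ t : ℝ, f t = f (t + I)) (s t : ℝ) : f s = f t := by
  have hclosure : im ⁻¹' Ico 0 1 ⊆ closure (im ⁻¹' Ioo (0 : ℝ) 1) := by
    rw [closure_preimage_im, closure_Ioo zero_ne_one]
    exact preimage_mono Ico_subset_Icc_self
  have hrange : Bornology.IsBounded (range (imPeriodize f)) :=
    hbdd.closure.subset <| range_imPeriodize_subset.trans <|
      (image_mono hclosure).trans hf.continuousOn.image_closure
  simpa only [imPeriodize_ofReal] using
    (differentiable_imPeriodize hf hper).apply_eq_apply_of_bounded hrange s t

end ImPeriodize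

section KMS

open Complex Set

theorem mapsTo_mul_kmsStrip {β : ℝ} (hβ : β ≠ 0) :
    MapsTo (fun z : ℂ ↦ β * z) (im ⁻¹' Ioo 0 1) (kmsStrip β) := by
  rintro z ⟨hz0, hz1⟩
  rcases hβ.lt_or_gt with h | h
  · simpa [kmsStrip, h.le, mul_neg_of_neg_of_pos h hz0] using mul_lt_mul_of_neg_left hz1 h
  · simpa [kmsStrip, h.le, mul_pos h hz0] using mul_lt_mul_of_pos_left hz1 h

theorem apply_ofReal_eq_of_isBounded_kmsStrip {E : Type*} [NormedAddCommGroup E]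
    [NormedSpace ℂ E] [CompleteSpace E] {F : ℂ → E} {β : ℝ} (hβ : β ≠ 0)
    (hF : DiffContOnCl ℂ F (kmsStrip β)) (hbdd : Bornology.IsBounded (F '' kmsStrip β))
    (hper : ∀ t : ℝ, F t = F (t + β * I)) (s t : ℝ) : F s = F t := by
  have hscaled : DiffContOnCl ℂ (F ∘ fun z ↦ β * z) (im ⁻¹' Ioo 0 1) :=
    hF.comp (Differentiable.diffContOnCl (by fun_prop)) (mapsTo_mul_kmsStrip hβ)
  have hscaled_bdd : Bornology.IsBounded ((F ∘ fun z ↦ β * z) '' (im ⁻¹' Ioo 0 1)) := by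
    rw [image_comp]
    exact hbdd.subset (image_mono (mapsTo_mul_kmsStrip hβ).image_subset)
  have hscaled_per (r : ℝ) : (F ∘ fun z ↦ β * z) r = (F ∘ fun z ↦ β * z) (r + I) := by
    simpa [mul_add] using hper (β * r)
  have hdiv (r : ℝ) : (β : ℂ) * (r / β : ℝ) = r := by
    exact_mod_cast mul_div_cancel₀ r hβ
  simpa only [Function.comp_apply, hdiv] using
    apply_ofReal_eq_of_isBounded_unit_strip hscaled hscaled_bdd hscaled_per (s / β) (t / β)

theorem SatisfiesKMSCondition.apply_mul_eq {A : Type} [NormedRing A] [NormedAlgebra ℂ A]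
    {φ : A →L[ℂ] ℂ} {τ : ℝ → A → A} {β : ℝ} (hkms : SatisfiesKMSCondition φ τ β) (hβ : β ≠ 0)
    (htrace : ∀ a b : A, φ (a * b) = φ (b * a)) (a b : A) (s t : ℝ) :
    φ (a * τ s b) = φ (a * τ t b) := by
  obtain ⟨F, hcont, ⟨C, hC⟩, hdiff, hreal, hshift⟩ := hkms a b
  have hbdd : Bornology.IsBounded (F '' kmsStrip β) :=
    isBounded_iff_forall_norm_le.2 ⟨C, forall_mem_image.2 fun z hz ↦ hC z (subset_closure hz)⟩
  have hper (r : ℝ) : F r = F (r + β * I) := by rw [hreal, hshift, htrace]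
  rw [← hreal, ← hreal]
  exact apply_ofReal_eq_of_isBounded_kmsStrip hβ ⟨hdiff, hcont⟩ hbdd hper s t

end KMS

theorem kms_on_commutative_algebra_trivial_general {A : Type} [NormedRing A] [NormedAlgebra ℂ A]
    (τ : ℝ → A → A) (hτ0 : ∀ a : A, τ 0 a = a) (β : ℝ) (hβ : β ≠ 0) (φ : A →L[ℂ] ℂ)
    (htrace : ∀ a b : A, φ (a * b) = φ (b * a))
    (hnondeg : ∀ a : A, (∀ b : A, φ (b * a) = 0) → a = 0)
    (hkms : SatisfiesKMSCondition φ τ β) (t : ℝ) (a : A) : τ t a = a := by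
  refine sub_eq_zero.1 (hnondeg _ fun b ↦ ?_)
  rw [mul_sub, map_sub, sub_eq_zero, hkms.apply_mul_eq hβ htrace b a t 0, hτ0]

/-- A faithful `(τ, β)`-KMS state on a **commutative** unital C*-algebra forces the
one-parameter automorphism group `τ` to be trivial. -/
theorem kms_on_commutative_algebra_trivial {A : Type} [CommCStarAlgebra A]
    (τ : ℝ → A ≃⋆ₐ[ℂ] A)
    (hτ0 : ∀ a : A, τ 0 a = a)
    (hτadd : ∀ (s t : ℝ) (a : A), τ s (τ t a) = τ (s + t) a)
    (β : ℝ) (hβ : β ≠ 0)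
    (φ : A →L[ℂ] ℂ)
    (hpos : ∀ a : A, 0 ≤ φ (star a * a)) (hnorm : ‖φ‖ = 1) (hone : φ 1 = 1)
    (hfaithful : ∀ a : A, a ≠ 0 → 0 < φ (star a * a))
    (hkms : SatisfiesKMSCondition φ (fun t a => τ t a) β) :
    ∀ (t : ℝ) (a : A), τ t a = a :=
  kms_on_commutative_algebra_trivial_general (fun t a ↦ τ t a) hτ0 β hβ φ
    (fun a b ↦ congrArg φ (mul_comm a b))
    (fun a ha ↦ by_contra fun hne ↦ (hfaithful a hne).ne' (ha (star a))) hkms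
end

section
/- Birkhoff's pointwise ergodic theorem: Let (X, Σ, μ) be a probability space, T : X → X a measure-preserving transformation that is ergodic with respect to μ, and f ∈ L¹(X, μ). Then for μ-almost every x ∈ X, the time averages converge to the space average: lim_{n→∞} (1/n) Σ_{i=0}^{n−1} f(Tⁱ(x)) = ∫_X f dμ. -/
open MeasureTheory

/-!
Let `Mₙ = max (S₀, …, Sₙ)` be the running maximum of the Birkhoff sums of `g`. Then
`Mₙ₊₁ = max (0, g + Mₙ ∘ T)`, so `Mₙ₊₁ - Mₙ ∘ T` is dominated by `|g|`, and it is eventually equal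
to `g` at every point where the Birkhoff sums are unbounded above. As `T` preserves the measure,
`∫ (Mₙ₊₁ - Mₙ ∘ T) = ∫ (Mₙ₊₁ - Mₙ) ≥ 0` on the invariant set of these points, so in the limit the
integral of `g` over that set is nonnegative. If the conditional expectation of `g` on the
invariant σ-algebra is negative, the set is therefore null. For an invariant `w` above the
conditional expectation of `f` this applies to `g = f - w`, and shows that the upper limit of the
averages of `f` is at most `w`; the lower limit is treated by passing to `-f`.
-/

open Filter Set Topology
open MeasurableSpace (invariants invariants_le)

section RunningMaximum

variable {X M : Type*} [AddCommMonoid M] [SemilatticeSup M] {T : X → X} {g : X → M} {x : X}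

/-- The running maximum `max (S₀ x, …, Sₙ x)` of the Birkhoff sums of `g` along the orbit of `x`;
the index `0` is included, with `S₀ = 0`. -/
def birkhoffMax (T : X → X) (g : X → M) (n : ℕ) (x : X) : M :=
  partialSups (birkhoffSum T g · x) n

theorem birkhoffMax_mono (T : X → X) (g : X → M) (x : X) : Monotone (birkhoffMax T g · x) :=
  partialSups_monotone _

theorem birkhoffMax_nonneg (T : X → X) (g : X → M) (n : ℕ) (x : X) : 0 ≤ birkhoffMax T g n x :=
  le_partialSups_of_le (birkhoffSum T g · x) n.zero_le

theorem bddAbove_range_birkhoffMax_iff :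
    BddAbove (range (birkhoffMax T g · x)) ↔ BddAbove (range (birkhoffSum T g · x)) :=
  bddAbove_range_partialSups

end RunningMaximum

section RunningMaximumGroup

variable {X M : Type*} [AddCommGroup M] [Lattice M] [IsOrderedAddMonoid M]
  {T : X → X} {g : X → M} {x : X}

theorem birkhoffMax_succ (T : X → X) (g : X → M) (n : ℕ) (x : X) :
    birkhoffMax T g (n + 1) x = 0 ⊔ (g x + birkhoffMax T g n (T x)) := by
  have shift : (birkhoffSum T g · x) ∘ (· + 1) = fun k ↦ g x + birkhoffSum T g k (T x) :=
    funext fun k ↦ birkhoffSum_succ' T g k x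
  rw [birkhoffMax, partialSups_add_one', shift, partialSups_const_add]
  rfl

theorem abs_birkhoffMax_succ_sub_le (T : X → X) (g : X → M) (n : ℕ) (x : X) :
    |birkhoffMax T g (n + 1) x - birkhoffMax T g n (T x)| ≤ |g x| := by
  have hM : -birkhoffMax T g n (T x) ≤ 0 := neg_nonpos.2 (birkhoffMax_nonneg T g n (T x))
  rw [birkhoffMax_succ, sup_sub, add_sub_cancel_right, zero_sub]
  refine abs_le'.2 ⟨sup_le (hM.trans (abs_nonneg _)) (le_abs_self _), ?_⟩
  exact (neg_le_neg le_sup_right).trans (neg_le_abs _)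

theorem bddAbove_range_birkhoffSum_apply_iff :
    BddAbove (range (birkhoffSum T g · (T x))) ↔ BddAbove (range (birkhoffSum T g · x)) := by
  have shift : (birkhoffSum T g · x) ∘ Nat.succ =
      OrderIso.addLeft (g x) ∘ (birkhoffSum T g · (T x)) :=
    funext fun k ↦ birkhoffSum_succ' T g k x
  rw [← Nat.range_of_succ (birkhoffSum T g · x), shift, range_comp, singleton_union,
    bddAbove_insert, OrderIso.bddAbove_image]

end RunningMaximumGroup

theorem eventually_birkhoffMax_succ_sub_eq {X M : Type*} [AddCommGroup M] [LinearOrder M]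
    [IsOrderedAddMonoid M] {T : X → X} {g : X → M} {x : X}
    (hx : ¬BddAbove (range (birkhoffSum T g · x))) :
    ∀ᶠ n in atTop, birkhoffMax T g (n + 1) x - birkhoffMax T g n (T x) = g x := by
  rw [← bddAbove_range_birkhoffSum_apply_iff, ← bddAbove_range_birkhoffMax_iff] at hx
  have diverges := tendsto_atTop_atTop_of_monotone' (birkhoffMax_mono T g (T x)) hx
  filter_upwards [diverges.eventually_ge_atTop (-g x)] with n hn
  rw [birkhoffMax_succ, sup_eq_right.2 (neg_le_iff_add_nonneg'.1 hn), add_sub_cancel_right]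

section MaximalErgodic

variable {X : Type*} [MeasurableSpace X] {μ : Measure X} {T : X → X}

theorem measurable_birkhoffSum {M : Type*} [AddCommMonoid M] [MeasurableSpace M]
    [MeasurableAdd₂ M] {g : X → M} (hT : Measurable T) (hg : Measurable g) (n : ℕ) :
    Measurable (birkhoffSum T g n) :=
  Finset.measurable_fun_sum _ fun i _ ↦ hg.comp (hT.iterate i)

theorem integrable_birkhoffMax {g : X → ℝ} (hT : MeasurePreserving T μ μ) (hg : Integrable g μ)
    (n : ℕ) : Integrable (birkhoffMax T g n) μ := by
  induction n with
  | zero => exact integrable_zero X ℝ μ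
  | succ n ih =>
    rw [funext (birkhoffMax_succ T g n)]
    exact (integrable_zero X ℝ μ).sup (hg.add (hT.integrable_comp_of_integrable ih))

theorem integral_birkhoffMax_succ_sub_nonneg {g : X → ℝ} (hT : MeasurePreserving T μ μ)
    (hg : Integrable g μ) (n : ℕ) :
    0 ≤ ∫ x, (birkhoffMax T g (n + 1) x - birkhoffMax T g n (T x)) ∂μ := by
  have hM := integrable_birkhoffMax hT hg
  have invariance : ∫ x, birkhoffMax T g n (T x) ∂μ = ∫ x, birkhoffMax T g n x ∂μ := by
    conv_rhs => rw [← hT.map_eq]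
    exact (integral_map hT.aemeasurable (hT.map_eq.symm ▸ (hM n).aestronglyMeasurable)).symm
  have hM_comp : Integrable (fun x ↦ birkhoffMax T g n (T x)) μ :=
    hT.integrable_comp_of_integrable (hM n)
  rw [integral_sub (hM (n + 1)) hM_comp, invariance, sub_nonneg]
  exact integral_mono (hM n) (hM (n + 1)) fun x ↦ birkhoffMax_mono T g x n.le_succ

theorem integral_nonneg_of_ae_not_bddAbove_birkhoffSum {g : X → ℝ}
    (hT : MeasurePreserving T μ μ) (hg : Integrable g μ)
    (hunbdd : ∀ᵐ x ∂μ, ¬BddAbove (range (birkhoffSum T g · x))) :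
    0 ≤ ∫ x, g x ∂μ := by
  have hM := integrable_birkhoffMax hT hg
  have hlim : Tendsto (fun n ↦ ∫ x, (birkhoffMax T g (n + 1) x - birkhoffMax T g n (T x)) ∂μ)
      atTop (𝓝 (∫ x, g x ∂μ)) := by
    refine tendsto_integral_of_dominated_convergence (fun x ↦ |g x|) (fun n ↦ ?_) hg.abs
      (fun n ↦ .of_forall (abs_birkhoffMax_succ_sub_le T g n)) ?_
    · exact ((hM (n + 1)).sub (hT.integrable_comp_of_integrable (hM n))).aestronglyMeasurable
    · exact hunbdd.mono fun x hx ↦ tendsto_nhds_of_eventually_eq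
        (eventually_birkhoffMax_succ_sub_eq hx)
  exact ge_of_tendsto' hlim (integral_birkhoffMax_succ_sub_nonneg hT hg)

theorem measurableSet_invariants_not_bddAbove_birkhoffSum {g : X → ℝ} (hT : Measurable T)
    (hg : Measurable g) :
    MeasurableSet[invariants T] {x | ¬BddAbove (range (birkhoffSum T g · x))} :=
  ⟨(measurableSet_bddAbove_range (measurable_birkhoffSum hT hg)).compl,
    Set.ext fun _ ↦ not_congr bddAbove_range_birkhoffSum_apply_iff⟩

theorem measure_eq_zero_of_ae_neg_of_integral_nonneg {g : X → ℝ} (hg : Integrable g μ)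
    (hneg : ∀ᵐ x ∂μ, g x < 0) (hint : 0 ≤ ∫ x, g x ∂μ) : μ = 0 := by
  have hle : g ≤ᵐ[μ] 0 := hneg.mono fun _ ↦ le_of_lt
  have hzero : g =ᵐ[μ] 0 :=
    (integral_eq_iff_of_ae_le hg (integrable_zero X ℝ μ) hle).1
      (by simpa using (integral_nonpos_of_ae hle).antisymm hint)
  refine ae_eq_bot.1 (eventually_false_iff_eq_bot.1 ?_)
  filter_upwards [hneg, hzero] with x hx hx0 using hx.ne hx0

theorem ae_bddAbove_birkhoffSum_of_condExp_neg {g : X → ℝ} (hT : MeasurePreserving T μ μ)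
    [SigmaFinite (μ.trim (invariants_le T))] (hg : Integrable g μ)
    (hneg : ∀ᵐ x ∂μ, (μ[g | invariants T]) x < 0) :
    ∀ᵐ x ∂μ, BddAbove (range (birkhoffSum T g · x)) := by
  wlog hgm : Measurable g generalizing g
  · have hae := hg.1.ae_eq_mk
    have hsum : ∀ᵐ x ∂μ, ∀ n, birkhoffSum T g n x = birkhoffSum T (hg.1.mk g) n x :=
      ae_all_iff.2 (hT.quasiMeasurePreserving.birkhoffSum_ae_eq_of_ae_eq hae)
    have hneg' : ∀ᵐ x ∂μ, (μ[hg.1.mk g | invariants T]) x < 0 := by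
      filter_upwards [hneg, condExp_congr_ae hae] with x hx hx' using hx' ▸ hx
    filter_upwards [hsum, this (hg.congr hae) hneg' hg.1.stronglyMeasurable_mk.measurable]
      with x hx hbdd
    simpa only [hx] using hbdd
  set D := {x | ¬BddAbove (range (birkhoffSum T g · x))}
  have hD := measurableSet_invariants_not_bddAbove_birkhoffSum hT.measurable hgm
  have hT_restrict : MeasurePreserving T (μ.restrict D) (μ.restrict D) := by
    simpa only [hD.2] using hT.restrict_preimage hD.1
  have hint : 0 ≤ ∫ x in D, g x ∂μ :=
    integral_nonneg_of_ae_not_bddAbove_birkhoffSum hT_restrict hg.integrableOn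
      (ae_restrict_mem hD.1)
  rw [← setIntegral_condExp (invariants_le T) hg hD] at hint
  exact Measure.restrict_eq_zero.1 (measure_eq_zero_of_ae_neg_of_integral_nonneg
    integrable_condExp.integrableOn (ae_restrict_of_ae hneg) hint)

end MaximalErgodic

theorem eventually_birkhoffAverage_lt_of_bddAbove {X : Type*} {T : X → X} {g : X → ℝ} {x : X}
    (hx : BddAbove (range (birkhoffSum T g · x))) {c : ℝ} (hc : 0 < c) :
    ∀ᶠ n in atTop, birkhoffAverage ℝ T g n x < c := by
  obtain ⟨C, hC⟩ := hx
  have hlim : Tendsto (fun n : ℕ ↦ (n : ℝ)⁻¹ * C) atTop (𝓝 0) := by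
    simpa only [zero_mul] using tendsto_inv_atTop_nhds_zero_nat.mul_const C
  filter_upwards [hlim.eventually_lt_const hc] with n hn
  exact (mul_le_mul_of_nonneg_left (hC ⟨n, rfl⟩) (by positivity)).trans_lt hn

theorem exists_pos_stronglyMeasurable_integrable_of_sigmaFinite_trim {X : Type*}
    {m m₀ : MeasurableSpace X} {μ : Measure X} (hm : m ≤ m₀) [SigmaFinite (μ.trim hm)] :
    ∃ v : X → ℝ, (∀ x, 0 < v x) ∧ StronglyMeasurable[m] v ∧ Integrable v μ := by
  obtain ⟨v, hpos, hmeas, hint⟩ :=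
    @exists_pos_lintegral_lt_of_sigmaFinite X m (μ.trim hm) _ 1 one_ne_zero
  have hv : Measurable[m] fun x ↦ (v x : ℝ) := hmeas.coe_nnreal_real
  refine ⟨fun x ↦ v x, hpos, hv.stronglyMeasurable, integrable_of_integrable_trim hm ?_⟩
  refine ⟨hv.stronglyMeasurable.aestronglyMeasurable, ?_⟩
  simpa only [hasFiniteIntegral_iff_enorm, NNReal.enorm_eq] using hint.trans ENNReal.one_lt_top

section Convergence

variable {X : Type*} [MeasurableSpace X] {μ : Measure X} {T : X → X} {f : X → ℝ}

theorem ae_eventually_birkhoffAverage_lt_of_condExp_lt (hT : MeasurePreserving T μ μ)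
    [SigmaFinite (μ.trim (invariants_le T))] (hf : Integrable f μ) {w : X → ℝ}
    (hw : StronglyMeasurable[invariants T] w) (hw_int : Integrable w μ)
    (hfw : ∀ᵐ x ∂μ, (μ[f | invariants T]) x < w x) :
    ∀ᵐ x ∂μ, ∀ c, w x < c → ∀ᶠ n in atTop, birkhoffAverage ℝ T f n x < c := by
  have hneg : ∀ᵐ x ∂μ, (μ[f - w | invariants T]) x < 0 := by
    filter_upwards [condExp_sub hf hw_int (invariants T), hfw] with x hsub hx
    rwa [hsub, condExp_of_stronglyMeasurable (invariants_le T) hw hw_int, Pi.sub_apply, sub_neg]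
  filter_upwards [ae_bddAbove_birkhoffSum_of_condExp_neg hT (hf.sub hw_int) hneg] with x hx c hc
  filter_upwards [eventually_birkhoffAverage_lt_of_bddAbove hx (sub_pos.2 hc),
    eventually_ne_atTop 0] with n hn hn0
  have hw_inv : w ∘ T = w := MeasurableSpace.comp_eq_of_measurable_invariants hw.measurable
  rw [birkhoffAverage_sub, Pi.sub_apply,
    birkhoffAverage_of_comp_eq ℝ hw_inv (Nat.cast_ne_zero.2 hn0)] at hn
  exact (sub_lt_sub_iff_right (w x)).1 hn

theorem ae_eventually_birkhoffAverage_lt (hT : MeasurePreserving T μ μ)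
    [SigmaFinite (μ.trim (invariants_le T))] (hf : Integrable f μ) :
    ∀ᵐ x ∂μ, ∀ c, (μ[f | invariants T]) x < c →
      ∀ᶠ n in atTop, birkhoffAverage ℝ T f n x < c := by
  -- Constants need not be integrable, so a positive invariant weight `v` takes the place of `ε`.
  obtain ⟨v, hv_pos, hv, hv_int⟩ :=
    exists_pos_stronglyMeasurable_integrable_of_sigmaFinite_trim (μ := μ) (invariants_le T)
  have hbound (k : ℕ) := ae_eventually_birkhoffAverage_lt_of_condExp_lt hT hf
    (stronglyMeasurable_condExp.add (hv.const_smul (1 / (k + 1 : ℝ))))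
    (integrable_condExp.add (hv_int.smul (1 / (k + 1 : ℝ))))
    (.of_forall fun x ↦ lt_add_of_pos_right _ (mul_pos Nat.one_div_pos_of_nat (hv_pos x)))
  filter_upwards [ae_all_iff.2 hbound] with x hx c hc
  obtain ⟨k, hk⟩ := exists_nat_one_div_lt (div_pos (sub_pos.2 hc) (hv_pos x))
  exact hx k c (lt_sub_iff_add_lt'.1 ((lt_div_iff₀ (hv_pos x)).1 hk))

theorem birkhoff_pointwise_ergodic_theorem_general (hT : MeasurePreserving T μ μ)
    [SigmaFinite (μ.trim (invariants_le T))] (hf : Integrable f μ) :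
    ∀ᵐ x ∂μ, Tendsto (birkhoffAverage ℝ T f · x) atTop (𝓝 ((μ[f | invariants T]) x)) := by
  filter_upwards [ae_eventually_birkhoffAverage_lt hT hf,
    ae_eventually_birkhoffAverage_lt hT hf.neg, condExp_neg f (invariants T)]
    with x hupper hlower hneg
  refine tendsto_order.2 ⟨fun c hc ↦ ?_, hupper⟩
  filter_upwards [hlower (-c) (hneg ▸ neg_lt_neg hc)] with n hn
  rw [birkhoffAverage_neg] at hn
  exact neg_lt_neg_iff.1 hn

theorem condExp_invariants_ae_eq_average {E : Type*} [NormedAddCommGroup E] [NormedSpace ℝ E]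
    [CompleteSpace E] [IsFiniteMeasure μ] (hT : QuasiErgodic T μ) (f : X → E) :
    μ[f | invariants T] =ᵐ[μ] fun _ ↦ ⨍ x, f x ∂μ := by
  have hinv : μ[f | invariants T] ∘ T = μ[f | invariants T] := by
    borelize E
    exact MeasurableSpace.comp_eq_of_measurable_invariants stronglyMeasurable_condExp.measurable
  obtain ⟨c, hc⟩ := hT.ae_eq_const_of_ae_eq_comp_ae integrable_condExp.aestronglyMeasurable
    (.of_eq hinv)
  rcases eq_zero_or_neZero μ with rfl | _
  · simp only [EventuallyEq, ae_zero, eventually_bot]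
  have hmean : ⨍ x, f x ∂μ = c := by
    rw [average_eq, ← integral_condExp (invariants_le T), ← average_eq, average_congr hc]
    exact average_const μ c
  exact hmean ▸ hc

end Convergence

/-- **Birkhoff's pointwise ergodic theorem**: for an ergodic measure-preserving
transformation `T` of a probability space and `f ∈ L¹(μ)`, the time averages
`(1/n) Σ_{i<n} f(Tⁱ x)` converge to the space average `∫ f dμ` for almost every `x`. -/
theorem birkhoff_pointwise_ergodic_theorem {X : Type} [MeasurableSpace X]
    {μ : Measure X} [IsProbabilityMeasure μ]
    {T : X → X} (hT : Ergodic T μ)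
    {f : X → ℝ} (hf : Integrable f μ) :
    ∀ᵐ x ∂μ, Filter.Tendsto
      (fun n : ℕ => (n : ℝ)⁻¹ * ∑ i ∈ Finset.range n, f (T^[i] x))
      Filter.atTop (nhds (∫ x, f x ∂μ)) := by
  filter_upwards [birkhoff_pointwise_ergodic_theorem_general hT.toMeasurePreserving hf,
    condExp_invariants_ae_eq_average hT.quasiErgodic f] with x hlim hmean
  rwa [hmean, average_eq_integral] at hlim
end

section
/- Kac's lemma: Let (X, Σ, μ) be a probability space and T : X → X an invertible, ergodic, measure-preserving transformation. Let A ∈ Σ with μ(A) > 0 and define the first return time τ_A(x) = inf{n ≥ 1 : Tⁿ(x) ∈ A} for x ∈ A (which is finite for μ-a.e. x ∈ A). Then ∫_A τ_A dμ = 1; in particular, the conditional expectation of the return time is E[τ_A | A] = (1/μ(A)) ∫_A τ_A dμ = 1/μ(A). -/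
/-!
Let `H n` be the set of points whose orbit meets `A` at some time `k < n`. Then
`H (n + 1) = A ∪ T⁻¹ (H n)`, and the part of `A` outside `T⁻¹ (H n)` is the set of `x ∈ A` with
`τ_A x > n`. As `T` preserves `μ`, it follows that `μ (H (n + 1)) = μ (H n) + μ (A ∩ {τ_A > n})`.
Summing over `n`, the layer-cake formula identifies `∫_A τ_A dμ` with the measure of the set of
points that ever visit `A`. By recurrence this set is invariant mod `μ`, hence of full measure
when `T` is ergodic. Telescoping over the sets `H n` instead of their complements avoids
subtracting possibly infinite measures.
-/

open MeasureTheory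
open scoped ENNReal

/-- The first return time to `A` under `T`: `τ_A(x) = inf {n ≥ 1 : Tⁿ(x) ∈ A}`
(with the convention `sInf ∅ = 0`). -/
noncomputable def firstReturnTime {X : Type} (T : X → X) (A : Set X) (x : X) : ℕ :=
  sInf {n : ℕ | 1 ≤ n ∧ T^[n] x ∈ A}

section LayerCake

variable {α : Type*} [MeasurableSpace α] {μ : Measure α}

lemma lintegral_natCast_eq_tsum_measure_lt {f : α → ℕ}
    (hf : ∀ n, NullMeasurableSet {x | n < f x} μ) :
    ∫⁻ x, (f x : ℝ≥0∞) ∂μ = ∑' n, μ {x | n < f x} := by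
  have layers (x : α) : (f x : ℝ≥0∞) = ∑' n, {y | n < f y}.indicator 1 x := by
    rw [tsum_eq_sum (s := Finset.range (f x)) (by simp),
      Finset.sum_congr rfl fun n hn =>
        Set.indicator_of_mem (s := {y | n < f y}) (Finset.mem_range.1 hn) 1]
    simp
  simp_rw [layers]
  rw [lintegral_tsum fun n => measurable_one.aemeasurable.indicator₀ (hf n)]
  exact tsum_congr fun n => lintegral_indicator_one₀ (hf n)

end LayerCake

section Hitting

variable {X : Type*} {T : X → X} {A : Set X}

/-- The set of points whose orbit under `T` visits `A` at some time `k < n`, time `0` included. -/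
def hitBefore (T : X → X) (A : Set X) (n : ℕ) : Set X :=
  {x | ∃ k < n, T^[k] x ∈ A}

lemma hitBefore_zero : hitBefore T A 0 = ∅ := by
  simp [hitBefore]

lemma hitBefore_succ (n : ℕ) : hitBefore T A (n + 1) = A ∪ T ⁻¹' hitBefore T A n := by
  ext x
  simp only [hitBefore, Set.mem_ofPred_eq, Nat.exists_lt_succ_left, Function.iterate_zero, id,
    Function.iterate_succ_apply, Set.mem_union, Set.mem_preimage]

lemma monotone_hitBefore : Monotone (hitBefore T A) :=
  fun _ _ hmn _ ⟨k, hk, hxk⟩ => ⟨k, hk.trans_le hmn, hxk⟩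

lemma iUnion_hitBefore : ⋃ n, hitBefore T A n = ⋃ n, T^[n] ⁻¹' A := by
  ext x
  simp only [Set.mem_iUnion, hitBefore, Set.mem_ofPred_eq, Set.mem_preimage]
  exact ⟨fun ⟨_, k, _, hk⟩ => ⟨k, hk⟩, fun ⟨k, hk⟩ => ⟨k + 1, k, k.lt_succ_self, hk⟩⟩

variable [MeasurableSpace X] {μ : Measure X}

lemma nullMeasurableSet_hitBefore (hT : Measure.QuasiMeasurePreserving T μ μ)
    (hA : NullMeasurableSet A μ) (n : ℕ) : NullMeasurableSet (hitBefore T A n) μ := by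
  induction n with
  | zero => exact hitBefore_zero ▸ .empty
  | succ n ih => exact hitBefore_succ (T := T) n ▸ hA.union (ih.preimage hT)

lemma measure_hitBefore_succ (hT : MeasurePreserving T μ μ) (hA : NullMeasurableSet A μ) (n : ℕ) :
    μ (hitBefore T A (n + 1)) = μ (hitBefore T A n) + μ (A \ T ⁻¹' hitBefore T A n) := by
  have hH := nullMeasurableSet_hitBefore hT.quasiMeasurePreserving hA n
  rw [hitBefore_succ, Set.union_comm, ← measure_add_sdiff (hH.preimage hT.quasiMeasurePreserving),
    hT.measure_preimage hH]

lemma tsum_measure_sdiff_preimage_hitBefore (hT : MeasurePreserving T μ μ)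
    (hA : NullMeasurableSet A μ) :
    ∑' n, μ (A \ T ⁻¹' hitBefore T A n) = μ (⋃ n, T^[n] ⁻¹' A) := by
  have partial_sum (N : ℕ) :
      ∑ n ∈ Finset.range N, μ (A \ T ⁻¹' hitBefore T A n) = μ (hitBefore T A N) := by
    induction N with
    | zero => simp [hitBefore_zero]
    | succ N ih => rw [Finset.sum_range_succ, ih, measure_hitBefore_succ hT hA]
  rw [ENNReal.tsum_eq_iSup_nat, ← iUnion_hitBefore, monotone_hitBefore.measure_iUnion]
  exact iSup_congr partial_sum

end Hitting

section Recurrence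

variable {X : Type*} [MeasurableSpace X] {μ : Measure X} {T : X → X} {A : Set X}

lemma ae_mem_imp_nonempty_return_times (hT : Conservative T μ) (hA : NullMeasurableSet A μ) :
    ∀ᵐ x ∂μ, x ∈ A → {n : ℕ | 1 ≤ n ∧ T^[n] x ∈ A}.Nonempty := by
  filter_upwards [hT.ae_mem_imp_frequently_image_mem hA] with x hx hxA
  exact (hx hxA).forall_exists_of_atTop 1

lemma preimage_iUnion_preimage_iterate_ae_eq (hT : Conservative T μ)
    (hA : NullMeasurableSet A μ) :
    T ⁻¹' (⋃ n, T^[n] ⁻¹' A) =ᵐ[μ] ⋃ n, T^[n] ⁻¹' A := by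
  refine Filter.eventuallyEq_set.2 ?_
  filter_upwards [ae_mem_imp_nonempty_return_times hT hA] with x hreturn
  simp only [Set.mem_preimage, Set.mem_iUnion, ← Function.iterate_succ_apply]
  refine ⟨fun ⟨n, hn⟩ => ⟨n + 1, hn⟩, ?_⟩
  rintro ⟨_ | n, hn⟩
  · obtain ⟨m, hm, hmA⟩ := hreturn hn
    obtain ⟨k, rfl⟩ := Nat.exists_eq_add_of_le' hm
    exact ⟨k, hmA⟩
  · exact ⟨n, hn⟩

lemma iUnion_preimage_iterate_ae_eq_univ (hT : QuasiErgodic T μ) (hcons : Conservative T μ)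
    (hA : NullMeasurableSet A μ) (hA0 : μ A ≠ 0) :
    (⋃ n, T^[n] ⁻¹' A) =ᵐ[μ] Set.univ := by
  have hmeas : NullMeasurableSet (⋃ n, T^[n] ⁻¹' A) μ :=
    .iUnion fun n => hA.preimage (hT.toQuasiMeasurePreserving.iterate n)
  have hinv := preimage_iUnion_preimage_iterate_ae_eq hcons hA
  refine (hT.ae_empty_or_univ₀ hmeas hinv).resolve_left fun hempty => hA0 ?_
  exact measure_mono_null (Set.subset_iUnion (fun n => T^[n] ⁻¹' A) 0) (ae_eq_empty.1 hempty)

end Recurrence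

section ReturnTime

variable {X : Type} {T : X → X} {A : Set X}

lemma lt_firstReturnTime_iff {x : X} (hx : {n : ℕ | 1 ≤ n ∧ T^[n] x ∈ A}.Nonempty) (n : ℕ) :
    n < firstReturnTime T A x ↔ x ∉ T ⁻¹' hitBefore T A n := by
  constructor
  · rintro hn ⟨k, hk, hkA⟩
    have : firstReturnTime T A x ≤ k + 1 := Nat.sInf_le ⟨k.succ_pos, hkA⟩
    omega
  · intro hmiss
    by_contra! hle
    obtain ⟨hpos, hmem⟩ : 1 ≤ firstReturnTime T A x ∧ T^[firstReturnTime T A x] x ∈ A :=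
      Nat.sInf_mem hx
    obtain ⟨k, hk⟩ := Nat.exists_eq_add_of_le' hpos
    rw [hk] at hle hmem
    exact hmiss ⟨k, hle, hmem⟩

variable [MeasurableSpace X] {μ : Measure X}

lemma setOf_lt_firstReturnTime_ae_eq (hT : Conservative T μ) (hA : NullMeasurableSet A μ) (n : ℕ) :
    {x | n < firstReturnTime T A x} =ᵐ[μ.restrict A] ((T ⁻¹' hitBefore T A n)ᶜ : Set X) := by
  refine Filter.eventuallyEq_set.2 ((ae_restrict_iff'₀ hA).2 ?_)
  filter_upwards [ae_mem_imp_nonempty_return_times hT hA] with x hreturn hxA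
  exact lt_firstReturnTime_iff (hreturn hxA) n

lemma setLIntegral_firstReturnTime (hT : MeasurePreserving T μ μ) (hcons : Conservative T μ)
    (hA : NullMeasurableSet A μ) :
    ∫⁻ x in A, (firstReturnTime T A x : ℝ≥0∞) ∂μ = μ (⋃ n, T^[n] ⁻¹' A) := by
  have hmiss (n : ℕ) : NullMeasurableSet (T ⁻¹' hitBefore T A n)ᶜ μ :=
    ((nullMeasurableSet_hitBefore hT.quasiMeasurePreserving hA n).preimage
      hT.quasiMeasurePreserving).compl
  have hae := setOf_lt_firstReturnTime_ae_eq hcons hA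
  calc ∫⁻ x in A, (firstReturnTime T A x : ℝ≥0∞) ∂μ
      = ∑' n, μ.restrict A {x | n < firstReturnTime T A x} :=
        lintegral_natCast_eq_tsum_measure_lt fun n =>
          ((hmiss n).mono_ac Measure.absolutelyContinuous_restrict).congr (hae n).symm
    _ = ∑' n, μ (A \ T ⁻¹' hitBefore T A n) := tsum_congr fun n => by
        rw [measure_congr (hae n), Measure.restrict_apply₀' hA, Set.sdiff_eq_compl_inter]
    _ = μ (⋃ n, T^[n] ⁻¹' A) := tsum_measure_sdiff_preimage_hitBefore hT hA

end ReturnTime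

theorem kac_lemma_general {X : Type} [MeasurableSpace X] {μ : Measure X} {T : X → X}
    (hT : Ergodic T μ) (hcons : Conservative T μ)
    {A : Set X} (hA : NullMeasurableSet A μ) (hA0 : μ A ≠ 0) :
    (∀ᵐ x ∂μ, x ∈ A → {n : ℕ | 1 ≤ n ∧ T^[n] x ∈ A}.Nonempty) ∧
    ∫⁻ x in A, (firstReturnTime T A x : ℝ≥0∞) ∂μ = μ Set.univ := by
  refine ⟨ae_mem_imp_nonempty_return_times hcons hA, ?_⟩
  rw [setLIntegral_firstReturnTime hT.toMeasurePreserving hcons hA,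
    measure_congr (iUnion_preimage_iterate_ae_eq_univ hT.quasiErgodic hcons hA hA0)]

/-- **Kac's lemma**: for an invertible ergodic measure-preserving transformation `T` of a
probability space and a set `A` of positive measure, the first return time `τ_A` is a.e.
finite on `A`, `∫_A τ_A dμ = 1`, and the conditional expectation of the return time is
`E[τ_A | A] = (1/μ(A)) ∫_A τ_A dμ = 1/μ(A)`. -/
theorem kac_lemma {X : Type} [MeasurableSpace X] {μ : Measure X} [IsProbabilityMeasure μ]
    (T : X ≃ᵐ X) (hT : Ergodic (⇑T) μ)
    (A : Set X) (hA : MeasurableSet A) (hA0 : 0 < μ A) :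
    (∀ᵐ x ∂μ, x ∈ A → {n : ℕ | 1 ≤ n ∧ (⇑T)^[n] x ∈ A}.Nonempty) ∧
    ∫⁻ x in A, (firstReturnTime (⇑T) A x : ℝ≥0∞) ∂μ = 1 ∧
    (μ A)⁻¹ * ∫⁻ x in A, (firstReturnTime (⇑T) A x : ℝ≥0∞) ∂μ = (μ A)⁻¹ := by
  obtain ⟨hreturn, hint⟩ := kac_lemma_general hT hT.conservative hA.nullMeasurableSet hA0.ne'
  exact ⟨hreturn, by rw [hint, measure_univ], by rw [hint, measure_univ, mul_one]⟩
end

section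
/- Feldman–Moore theorem: Let X be a standard Borel space and R ⊆ X × X a Borel equivalence relation all of whose equivalence classes are countable. Then there exist a countable group G and a Borel action of G on X (each map x ↦ g·x being Borel) such that R is the orbit equivalence relation of this action: R = {(x, g·x) : x ∈ X, g ∈ G}. -/
/-!
The core is the Lusin–Novikov theorem: a countable-to-one Borel map `f` is injective on each piece
of some countable Borel cover. Such maps are reduced to continuous ones by refining the topology.
If the theorem fails for a continuous `f`, then starting from the whole space one keeps splitting
each set of a finite family into two small disjoint closed pieces, in such a way that the images of
all pieces still meet after any set covered by countably many injectivity domains is deleted; Lusin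
separation shows that this is always possible. The resulting Cantor scheme has all its branches in a
single fibre of `f`, which is therefore uncountable.

Applied to both projections of a countable Borel equivalence relation, Lusin–Novikov cuts its
off-diagonal part into countably many graphs of partial Borel injections with disjoint domain and
range. Swapping domain with range extends each of them to a Borel involution of the whole space, and
these involutions generate the group.
-/

open Set Function Filter MeasureTheory Topology

section AnalyticSets

variable {α ι : Type*} [TopologicalSpace α] [PolishSpace α] [MeasurableSpace α] [BorelSpace α]

lemma exists_measurableSet_superset_biInter_subset {A : ι → Set α}
    (hA : ∀ i, AnalyticSet (A i)) (s : Finset ι) {D : Set α} (hD : AnalyticSet Dᶜ)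
    (hAD : ⋂ i ∈ s, A i ⊆ D) :
    ∃ C : ι → Set α, (∀ i, MeasurableSet (C i)) ∧ (∀ i, A i ⊆ C i) ∧ ⋂ i ∈ s, C i ⊆ D := by
  classical
  induction s using Finset.induction_on generalizing D with
  | empty => exact ⟨fun _ => univ, fun _ => .univ, fun _ => subset_univ _, by simpa using hAD⟩
  | insert a s ha ih =>
    have analyticSet_inter {S T : Set α} (hS : AnalyticSet S) (hT : AnalyticSet T) :
        AnalyticSet (S ∩ T) := by
      rw [inter_eq_iInter]
      exact .iInter (Bool.forall_bool.2 ⟨hT, hS⟩)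
    obtain ⟨C, hC, hAC, hCD⟩ := ih (D := (Dᶜ ∩ A a)ᶜ)
      (by simpa only [compl_compl] using analyticSet_inter hD (hA a))
      fun x hx hxD => hxD.1 (hAD (by simpa using ⟨hxD.2, by simpa using hx⟩))
    have hCm : MeasurableSet (⋂ i ∈ s, C i) := s.measurableSet_biInter fun i _ => hC i
    obtain ⟨S, hS, hDS, hSm⟩ : MeasurablySeparable (A a ∩ ⋂ i ∈ s, C i) Dᶜ :=
      (analyticSet_inter (hA a) hCm.analyticSet).measurablySeparable hD <|
        disjoint_left.2 fun x hx hxD => hCD hx.2 ⟨hxD, hx.1⟩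
    refine ⟨update C a (S ∪ (⋂ i ∈ s, C i)ᶜ),
      forall_update_iff C (fun _ T => MeasurableSet T) |>.2 ⟨hSm.union hCm.compl, fun i _ => hC i⟩,
      forall_update_iff C (fun i T => A i ⊆ T) |>.2 ⟨fun x hx => ?_, fun i _ => hAC i⟩,
      fun x hx => ?_⟩
    · by_cases hxC : x ∈ ⋂ i ∈ s, C i
      · exact .inl (hS ⟨hx, hxC⟩)
      · exact .inr hxC
    · rw [Finset.set_biInter_insert_update _ ha] at hx
      by_contra hxD
      exact hx.1.elim (disjoint_left.1 hDS hxD) (· hx.2)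

lemma exists_measurableSet_superset_iInter_eq_empty [Finite ι] {A : ι → Set α}
    (hA : ∀ i, AnalyticSet (A i)) (hAe : ⋂ i, A i = ∅) :
    ∃ C : ι → Set α, (∀ i, MeasurableSet (C i)) ∧ (∀ i, A i ⊆ C i) ∧ ⋂ i, C i = ∅ := by
  have := Fintype.ofFinite ι
  simpa [subset_empty_iff] using exists_measurableSet_superset_biInter_subset hA Finset.univ
    (D := ∅) (by simpa using MeasurableSet.univ.analyticSet) (by simpa using hAe.subset)

end AnalyticSets

lemma analyticSet_setOf_nontrivial_fiber {α β : Type*} [MeasurableSpace α] [StandardBorelSpace α]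
    [TopologicalSpace β] [T2Space β] [SecondCountableTopology β] [MeasurableSpace β] [BorelSpace β]
    {f : α → β} (hf : Measurable f) {s : Set α} (hs : MeasurableSet s) :
    AnalyticSet {y | (s ∩ f ⁻¹' {y}).Nontrivial} := by
  have hP : MeasurableSet {p : α × α | (p.1 ∈ s ∧ p.2 ∈ s) ∧ p.1 ≠ p.2 ∧ f p.1 = f p.2} :=
    (hs.prod hs).inter <| (measurableSet_eq_fun measurable_fst measurable_snd).compl.inter <|
      measurableSet_eq_fun (hf.comp measurable_fst) (hf.comp measurable_snd)
  convert hP.analyticSet_image (hf.comp measurable_fst) using 1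
  ext y
  constructor
  · rintro ⟨x, ⟨hx, rfl⟩, x', ⟨hx', hxx'⟩, hne⟩
    exact ⟨(x, x'), ⟨⟨hx, hx'⟩, hne, hxx'.symm⟩, rfl⟩
  · rintro ⟨⟨x, x'⟩, ⟨⟨hx, hx'⟩, hne, hxx'⟩, rfl⟩
    exact ⟨x, ⟨hx, rfl⟩, x', ⟨hx', hxx'.symm⟩, hne⟩

/-- `f` is σ-injective on `s`: countably many measurable sets on which `f` is injective cover `s`.
For fixed `f` these sets form a σ-ideal, whose members are the negligible sets in the proof of the
Lusin–Novikov theorem. -/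
def SigmaInjOn {α β : Type*} [MeasurableSpace α] (f : α → β) (s : Set α) : Prop :=
  ∃ E : Set (Set α), E.Countable ∧ (∀ e ∈ E, MeasurableSet e ∧ InjOn f e) ∧ s ⊆ ⋃₀ E

namespace SigmaInjOn

variable {α β : Type*} [MeasurableSpace α] {f : α → β} {s t : Set α}

lemma of_injOn (hs : MeasurableSet s) (hf : InjOn f s) : SigmaInjOn f s :=
  ⟨{s}, countable_singleton s, by simpa using ⟨hs, hf⟩, by simp⟩

lemma iUnion {ι : Type*} [Countable ι] {s : ι → Set α} (hs : ∀ i, SigmaInjOn f (s i)) :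
    SigmaInjOn f (⋃ i, s i) := by
  choose E hEc hE hsE using hs
  refine ⟨⋃ i, E i, countable_iUnion hEc, fun e he => ?_, iUnion_subset fun i => ?_⟩
  · obtain ⟨i, hi⟩ := mem_iUnion.1 he
    exact hE i e hi
  · exact (hsE i).trans (sUnion_subset_sUnion (subset_iUnion E i))

lemma union (hs : SigmaInjOn f s) (ht : SigmaInjOn f t) : SigmaInjOn f (s ∪ t) := by
  rw [union_eq_iUnion]
  exact iUnion (Bool.forall_bool.2 ⟨ht, hs⟩)

lemma exists_measurableSet_superset (hs : SigmaInjOn f s) :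
    ∃ t, s ⊆ t ∧ MeasurableSet t ∧ SigmaInjOn f t := by
  obtain ⟨E, hEc, hE, hsE⟩ := hs
  exact ⟨⋃₀ E, hsE, .sUnion hEc fun e he => (hE e he).1, E, hEc, hE, Subset.rfl⟩

end SigmaInjOn

/-- A family of sets is large if the `f`-images of its members have a common point, and still do
after any set on which `f` is σ-injective has been removed. -/
def LargeFamily {α β ι : Type*} [MeasurableSpace α] (f : α → β) (U : ι → Set α) : Prop :=
  ∀ s, SigmaInjOn f s → (⋂ i, f '' (U i \ s)).Nonempty

namespace LargeFamily

variable {α β ι : Type*} [MeasurableSpace α] {f : α → β} {U : ι → Set α}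

lemma comp {ι' : Type*} (hU : LargeFamily f U) (e : ι' → ι) : LargeFamily f (U ∘ e) :=
  fun s hs => (hU s hs).mono fun _ hy => mem_iInter.2 fun i => mem_iInter.1 hy (e i)

lemma const_univ (hf : ¬ SigmaInjOn f univ) : LargeFamily f fun _ : ι => (univ : Set α) := by
  intro s hs
  obtain ⟨x, hx⟩ : sᶜ.Nonempty := nonempty_compl.2 fun h => hf (h ▸ hs)
  exact ⟨f x, mem_iInter.2 fun _ => mem_image_of_mem f ⟨mem_univ x, hx⟩⟩

lemma exists_forall_exists_mem (hU : LargeFamily f U) : ∃ y, ∀ i, ∃ x ∈ U i, f x = y := by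
  obtain ⟨y, hy⟩ := hU ∅ (.of_injOn .empty (injOn_empty f))
  exact ⟨y, by simpa using hy⟩

lemma exists_split [StandardBorelSpace α] [MeasurableSpace β] [StandardBorelSpace β] [Finite ι]
    {κ : Type*} [Countable κ] (hf : Measurable f) (hUm : ∀ i, MeasurableSet (U i))
    (hU : LargeFamily f U) {P : κ → Bool → Set α}
    (hP : ∀ x y, x ≠ y → ∃ k, x ∈ P k false ∧ y ∈ P k true) :
    ∃ c : ι → κ, LargeFamily f fun j : ι × Bool => U j.1 ∩ P (c j.1) j.2 := by
  -- If every choice of `c` fails, remove the countably many witnesses: over each `y`, some `U i` is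
  -- left with at most one point of the fibre. Lusin separation turns this into Borel sets of `y`.
  let := upgradeStandardBorel β
  by_contra! hc
  simp only [LargeFamily, not_forall, not_nonempty_iff_eq_empty] at hc
  choose N hN hNempty using hc
  obtain ⟨B, hNB, hBm, hB⟩ := (SigmaInjOn.iUnion hN).exists_measurableSet_superset
  have hUB : ∀ i, MeasurableSet (U i \ B) := fun i => (hUm i).diff hBm
  have hnontrivial : ⋂ i, {y | (U i \ B ∩ f ⁻¹' {y}).Nontrivial} = ∅ := by
    refine eq_empty_of_forall_notMem fun y hy => ?_
    have hsplit : ∀ i, ∃ k, ∀ b, ∃ x ∈ P k b, x ∈ U i \ B ∧ f x = y := fun i => by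
      obtain ⟨x, ⟨hx, hfx⟩, x', ⟨hx', hfx'⟩, hne⟩ := mem_iInter.1 hy i
      obtain ⟨k, hk, hk'⟩ := hP x x' hne
      exact ⟨k, Bool.forall_bool.2 ⟨⟨x, hk, hx, hfx⟩, ⟨x', hk', hx', hfx'⟩⟩⟩
    choose c hc using hsplit
    refine eq_empty_iff_forall_notMem.1 (hNempty c) y (mem_iInter.2 fun j => ?_)
    obtain ⟨x, hxP, ⟨hxU, hxB⟩, hfx⟩ := hc j.1 j.2
    exact ⟨x, ⟨⟨hxU, hxP⟩, fun hxN => hxB (hNB (mem_iUnion_of_mem c hxN))⟩, hfx⟩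
  obtain ⟨C, hCm, hC, hCempty⟩ := exists_measurableSet_superset_iInter_eq_empty
    (fun i => analyticSet_setOf_nontrivial_fiber hf (hUB i)) hnontrivial
  have hinj : ∀ i, InjOn f ((U i \ B) \ f ⁻¹' C i) := fun i x hx x' hx' hxx' => by
    by_contra hne
    exact hx.2 (hC i ⟨x, ⟨hx.1, rfl⟩, x', ⟨hx'.1, hxx'.symm⟩, hne⟩)
  obtain ⟨y, hy⟩ := hU _ <| hB.union <| .iUnion fun i =>
    .of_injOn ((hUB i).diff (hf (hCm i))) (hinj i)
  refine eq_empty_iff_forall_notMem.1 hCempty y (mem_iInter.2 fun i => ?_)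
  obtain ⟨x, ⟨hxU, hx⟩, rfl⟩ := mem_iInter.1 hy i
  by_contra hxC
  exact hx (.inr (mem_iUnion_of_mem i ⟨⟨hxU, fun hxB => hx (.inl hxB)⟩, hxC⟩))

end LargeFamily

lemma exists_countable_disjoint_isClosed_separating {α : Type*} [EMetricSpace α]
    [SecondCountableTopology α] {ε : ENNReal} (hε : 0 < ε) :
    ∃ T : Set (Bool → Set α), T.Countable ∧
      (∀ P ∈ T, (∀ b, IsClosed (P b)) ∧ (∀ b, Metric.ediam (P b) ≤ ε) ∧ Pairwise (Disjoint on P)) ∧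
      ∀ x y, x ≠ y → ∃ P ∈ T, x ∈ P false ∧ y ∈ P true := by
  let B := TopologicalSpace.countableBasis α
  have hB : TopologicalSpace.IsTopologicalBasis B := TopologicalSpace.isBasis_countableBasis α
  let pair (p : Set α × Set α) (b : Bool) : Set α := bif b then closure p.2 else closure p.1
  let small : Set (Set α) := {u ∈ B | Metric.ediam u ≤ ε}
  have hsmall : ∀ x u, IsOpen u → x ∈ u → ∃ v ∈ small, x ∈ v ∧ v ⊆ u := fun x u hu hxu => by
    obtain ⟨v, hvB, hxv, hv⟩ := hB.exists_subset_of_mem_open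
      (show x ∈ u ∩ Metric.eball x (ε / 2) from
        ⟨hxu, Metric.mem_eball_self (ENNReal.half_pos hε.ne')⟩)
      (hu.inter Metric.isOpen_eball)
    refine ⟨v, ⟨hvB, ?_⟩, hxv, hv.trans inter_subset_left⟩
    calc Metric.ediam v ≤ Metric.ediam (Metric.eball x (ε / 2)) :=
          Metric.ediam_mono (hv.trans inter_subset_right)
      _ ≤ 2 * (ε / 2) := Metric.ediam_eball_le
      _ = ε := ENNReal.mul_div_cancel two_ne_zero ENNReal.ofNat_ne_top
  refine ⟨pair '' {p | p ∈ small ×ˢ small ∧ Disjoint (closure p.1) (closure p.2)}, ?_, ?_, ?_⟩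
  · have hcount : small.Countable :=
      (TopologicalSpace.countable_countableBasis α).mono (sep_subset _ _)
    exact ((hcount.prod hcount).mono (sep_subset _ _)).image pair
  · rintro _ ⟨⟨u, v⟩, ⟨⟨hu, hv⟩, huv⟩, rfl⟩
    refine ⟨Bool.forall_bool.2 ⟨isClosed_closure, isClosed_closure⟩,
      Bool.forall_bool.2 ⟨?_, ?_⟩, pairwise_disjoint_on_bool.2 huv.symm⟩
    · exact (Metric.ediam_closure u).trans_le hu.2
    · exact (Metric.ediam_closure v).trans_le hv.2
  · intro x y hxy
    obtain ⟨u, hxu, hu, v, hyv, hv, huv⟩ := exists_open_nhds_disjoint_closure hxy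
    obtain ⟨u', hu', hxu', huu'⟩ := hsmall x u hu hxu
    obtain ⟨v', hv', hyv', hvv'⟩ := hsmall y v hv hyv
    exact ⟨_, ⟨(u', v'), ⟨⟨hu', hv'⟩, huv.mono (closure_mono huu') (closure_mono hvv')⟩, rfl⟩,
      subset_closure hxu', subset_closure hyv'⟩

lemma LargeFamily.exists_refine {α β ι : Type*} [MetricSpace α] [SecondCountableTopology α]
    [MeasurableSpace α] [BorelSpace α] [StandardBorelSpace α] [MeasurableSpace β]
    [StandardBorelSpace β] {f : α → β} {U : ι → Set α} [Finite ι] (hf : Measurable f)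
    (hUc : ∀ i, IsClosed (U i)) (hU : LargeFamily f U) {ε : ENNReal} (hε : 0 < ε) :
    ∃ V : ι × Bool → Set α, LargeFamily f V ∧ (∀ j, IsClosed (V j)) ∧ (∀ j, V j ⊆ U j.1) ∧
      (∀ j, Metric.ediam (V j) ≤ ε) ∧ ∀ i, Pairwise (Disjoint on fun b => V (i, b)) := by
  obtain ⟨T, hTc, hT, hsep⟩ := exists_countable_disjoint_isClosed_separating (α := α) hε
  have := hTc.to_subtype
  obtain ⟨c, hc⟩ := hU.exists_split (P := ((↑) : T → Bool → Set α)) hf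
    (fun i => (hUc i).measurableSet) fun x y hxy =>
      let ⟨Q, hQT, hx, hy⟩ := hsep x y hxy
      ⟨⟨Q, hQT⟩, hx, hy⟩
  refine ⟨_, hc, fun j => (hUc j.1).inter ((hT _ (c j.1).2).1 j.2), fun j => inter_subset_left,
    fun j => (Metric.ediam_mono inter_subset_right).trans ((hT _ (c j.1).2).2.1 j.2),
    fun i => (hT _ (c i).2).2.2.mono fun _ _ h => h.mono inter_subset_right inter_subset_right⟩

lemma exists_cantorScheme_of_not_sigmaInjOn {α β : Type*} [MetricSpace α]
    [SecondCountableTopology α] [MeasurableSpace α] [BorelSpace α] [StandardBorelSpace α]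
    [MeasurableSpace β] [StandardBorelSpace β] {f : α → β} (hf : Measurable f)
    (hfσ : ¬ SigmaInjOn f univ) :
    ∃ A : List Bool → Set α, CantorScheme.ClosureAntitone A ∧ CantorScheme.VanishingDiam A ∧
      CantorScheme.Disjoint A ∧ ∀ n, ∃ y, ∀ l, l.length = n → ∃ x ∈ A l, f x = y := by
  let Level (n : ℕ) := {U : List.Vector Bool n → Set α // (∀ v, IsClosed (U v)) ∧ LargeFamily f U}
  have hstep (n : ℕ) (U : Level n) : ∃ V : Level (n + 1), (∀ v, V.1 v ⊆ U.1 v.tail) ∧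
      (∀ v, Metric.ediam (V.1 v) ≤ (n + 1 : ENNReal)⁻¹) ∧
      ∀ v, Pairwise (Disjoint on fun b => V.1 (b ::ᵥ v)) := by
    obtain ⟨V, hV, hVc, hVU, hVε, hVd⟩ := U.2.2.exists_refine hf U.2.1
      (ε := (n + 1 : ENNReal)⁻¹) (by simp)
    exact ⟨⟨_, fun v => hVc _, hV.comp fun v => (v.tail, v.head)⟩, fun v => hVU _, fun v => hVε _,
      hVd⟩
  choose next hsub hdiam hdisj using hstep
  let level : ∀ n, Level n :=
    Nat.rec ⟨fun _ => univ, fun _ => isClosed_univ, .const_univ hfσ⟩ next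
  let A (l : List Bool) : Set α := (level l.length).1 ⟨l, rfl⟩
  have hanti : CantorScheme.Antitone A := fun l b => hsub l.length _ ⟨b :: l, rfl⟩
  refine ⟨A, hanti.closureAntitone fun l => (level l.length).2.1 _, fun a => ?_,
    fun l => hdisj l.length _ ⟨l, rfl⟩, fun n => ?_⟩
  · rw [← tendsto_add_atTop_iff_nat 1]
    have hle (n : ℕ) : Metric.ediam (A (PiNat.res a (n + 1))) ≤ ((n + 1 : ℕ) : ENNReal)⁻¹ :=
      (hdiam _ _ ⟨PiNat.res a (n + 1), rfl⟩).trans_eq (by simp)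
    exact tendsto_of_tendsto_of_tendsto_of_le_of_le tendsto_const_nhds
      ((tendsto_add_atTop_iff_nat 1).2 ENNReal.tendsto_inv_nat_nhds_zero) (fun _ => zero_le) hle
  · obtain ⟨y, hy⟩ := (level n).2.2.exists_forall_exists_mem
    exact ⟨y, by rintro l rfl; exact hy ⟨l, rfl⟩⟩

lemma exists_injective_comp_const_of_cantorScheme {α β : Type*} [MetricSpace α] [CompleteSpace α]
    [TopologicalSpace β] [T2Space β] {f : α → β} (hf : Continuous f) {A : List Bool → Set α}
    (hanti : CantorScheme.ClosureAntitone A) (hdiam : CantorScheme.VanishingDiam A)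
    (hdisj : CantorScheme.Disjoint A)
    (hA : ∀ n, ∃ y, ∀ l, l.length = n → ∃ x ∈ A l, f x = y) :
    ∃ w : (ℕ → Bool) → α, Injective w ∧ ∀ a b, f (w a) = f (w b) := by
  have hdom : (CantorScheme.inducedMap A).1 = univ := hanti.map_of_vanishingDiam hdiam fun l =>
    let ⟨_, hy⟩ := hA l.length
    let ⟨x, hx, _⟩ := hy l rfl
    ⟨x, hx⟩
  let branch (a : ℕ → Bool) : (CantorScheme.inducedMap A).1 := ⟨a, hdom ▸ mem_univ a⟩
  let w (a : ℕ → Bool) : α := (CantorScheme.inducedMap A).2 (branch a)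
  choose y hy using hA
  have hlim (a : ℕ → Bool) : Tendsto y atTop (𝓝 (f (w a))) := by
    choose z hzA hzy using fun n => hy n (PiNat.res a n) (PiNat.res_length a n)
    have hz : Tendsto z atTop (𝓝 (w a)) := by
      rw [tendsto_iff_edist_tendsto_0]
      exact tendsto_of_tendsto_of_tendsto_of_le_of_le tendsto_const_nhds (hdiam a)
        (fun _ => zero_le) fun n =>
          Metric.edist_le_ediam_of_mem (hzA n) (CantorScheme.map_mem (branch a) n)
    exact ((hf.tendsto _).comp hz).congr hzy
  exact ⟨w, hdisj.map_injective.comp fun a b hab => congrArg Subtype.val hab,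
    fun a b => tendsto_nhds_unique (hlim a) (hlim b)⟩

lemma sigmaInjOn_univ_of_continuous_of_countable_fibers {α β : Type*} [TopologicalSpace α]
    [PolishSpace α] [MeasurableSpace α] [BorelSpace α] [TopologicalSpace β] [PolishSpace β]
    [MeasurableSpace β] [BorelSpace β] {f : α → β} (hf : Continuous f)
    (hcount : ∀ y, (f ⁻¹' {y}).Countable) : SigmaInjOn f univ := by
  let := TopologicalSpace.upgradeIsCompletelyMetrizable α
  by_contra hfσ
  obtain ⟨A, hanti, hdiam, hdisj, hA⟩ := exists_cantorScheme_of_not_sigmaInjOn hf.measurable hfσ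
  obtain ⟨w, hw, hfw⟩ := exists_injective_comp_const_of_cantorScheme hf hanti hdiam hdisj hA
  have hrange : MapsTo w univ (f ⁻¹' {f (w fun _ => false)}) := fun a _ => hfw a _
  have : Countable (ℕ → Bool) :=
    countable_univ_iff.1 (hrange.countable_of_injOn hw.injOn (hcount _))
  obtain ⟨g, hg⟩ := exists_surjective_nat (ℕ → Bool)
  obtain ⟨n, hn⟩ := hg fun m => !g m m
  simpa using congrFun hn n

/-- The **Lusin–Novikov theorem**. -/
theorem sigmaInjOn_of_countable_fibers {α β : Type*} [MeasurableSpace α] [StandardBorelSpace α]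
    [MeasurableSpace β] [StandardBorelSpace β] {f : α → β} (hf : Measurable f) {s : Set α}
    (hs : MeasurableSet s) (hcount : ∀ y, (s ∩ f ⁻¹' {y}).Countable) : SigmaInjOn f s := by
  have := hs.standardBorel
  let := upgradeStandardBorel β
  let τ := upgradeStandardBorel s
  have hfs : Measurable (f ∘ ((↑) : s → α)) := hf.comp measurable_subtype_coe
  obtain ⟨τ', hle, hcont, hpolish⟩ := hfs.exists_continuous
  have hborel : @BorelSpace s τ' _ := by
    refine @BorelSpace.mk _ τ' _ ?_
    rw [eq_borel_upgradeStandardBorel s]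
    exact (borel_eq_borel_of_le hpolish τ.toPolishSpace hle).symm
  have hfib (y : β) : ((f ∘ ((↑) : s → α)) ⁻¹' {y}).Countable :=
    ((hcount y).preimage Subtype.val_injective).mono
      fun x hx => show x.1 ∈ s ∩ f ⁻¹' {y} from ⟨x.2, hx⟩
  obtain ⟨E, hEc, hE, hEu⟩ := sigmaInjOn_univ_of_continuous_of_countable_fibers hcont hfib
  refine ⟨image (↑) '' E, hEc.image _, ?_, fun x hx => ?_⟩
  · rintro _ ⟨e, he, rfl⟩
    exact ⟨hs.subtype_image (hE e he).1, (hE e he).2.image_of_comp⟩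
  · obtain ⟨e, he, hxe⟩ := hEu (mem_univ ⟨x, hx⟩)
    exact ⟨_, mem_image_of_mem _ he, ⟨x, hx⟩, hxe, rfl⟩

lemma measurable_of_measurableSet_graph {α β : Type*} [MeasurableSpace α] [StandardBorelSpace α]
    [MeasurableSpace β] [StandardBorelSpace β] {g : α → β}
    (hg : MeasurableSet {p : α × β | g p.1 = p.2}) : Measurable g := by
  intro s hs
  have hpre : g ⁻¹' s = Prod.fst '' ({p : α × β | g p.1 = p.2} ∩ Prod.snd ⁻¹' s) := by
    ext x
    simp
  rw [hpre]
  refine (hg.inter (measurable_snd hs)).image_of_measurable_injOn measurable_fst ?_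
  rintro ⟨x, y⟩ ⟨hxy : g x = y, -⟩ ⟨x', y'⟩ ⟨hxy' : g x' = y', -⟩ (rfl : x = x')
  exact Prod.ext rfl (hxy.symm.trans hxy')

section BorelMatching

variable {X : Type*} [MeasurableSpace X]

/-- A Borel matching on `X`: the graph of a Borel bijection between two disjoint Borel subsets. -/
structure IsBorelMatching (M : Set (X × X)) : Prop where
  measurableSet : MeasurableSet M
  injOn_fst : InjOn Prod.fst M
  injOn_snd : InjOn Prod.snd M
  disjoint : Disjoint (Prod.fst '' M) (Prod.snd '' M)

lemma IsBorelMatching.injOn_fst_union_swap {M : Set (X × X)} (hM : IsBorelMatching M) :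
    InjOn Prod.fst (M ∪ Prod.swap ⁻¹' M) := by
  have fst_ne_snd {p q : X × X} (hp : p ∈ M) (hq : q ∈ M) : p.1 ≠ q.2 :=
    disjoint_iff_forall_ne.1 hM.disjoint (mem_image_of_mem _ hp) (mem_image_of_mem _ hq)
  rintro p (hp | hp) q (hq | hq) hpq
  · exact hM.injOn_fst hp hq hpq
  · exact absurd hpq (fst_ne_snd hp hq)
  · exact absurd hpq.symm (fst_ne_snd hq hp)
  · exact Prod.swap_injective (hM.injOn_snd hp hq hpq)

variable [StandardBorelSpace X]

lemma exists_measurable_involutive_of_symmetric {N : Set (X × X)} (hN : MeasurableSet N)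
    (hsymm : ∀ p ∈ N, p.swap ∈ N) (hinj : InjOn Prod.fst N) :
    ∃ g : X → X, Measurable g ∧ Involutive g ∧ (∀ p ∈ N, g p.1 = p.2) ∧
      ∀ x, g x = x ∨ (x, g x) ∈ N := by
  let Γ : Set (X × X) := N ∪ {p | p.1 ∉ Prod.fst '' N ∧ p.1 = p.2}
  have hΓm : MeasurableSet Γ := hN.union <|
    (measurable_fst (hN.image_of_measurable_injOn measurable_fst hinj).compl).inter
      (measurableSet_eq_fun measurable_fst measurable_snd)
  have hΓ : ∀ x, ∃! y, (x, y) ∈ Γ := fun x => by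
    by_cases hx : x ∈ Prod.fst '' N
    · obtain ⟨⟨x, y⟩, hxy, rfl⟩ := hx
      refine ⟨y, .inl hxy, fun y' hy' => ?_⟩
      obtain hy' | ⟨hx, -⟩ := hy'
      · exact congrArg Prod.snd (hinj hy' hxy rfl)
      · exact absurd (mem_image_of_mem Prod.fst hxy) hx
    · refine ⟨x, .inr ⟨hx, rfl⟩, fun y' hy' => ?_⟩
      obtain hy' | ⟨-, hxy'⟩ := hy'
      · exact absurd (mem_image_of_mem Prod.fst hy') hx
      · exact hxy'.symm
  choose g hg hg_unique using hΓ
  have hgraph : {p : X × X | g p.1 = p.2} = Γ := by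
    ext ⟨x, y⟩
    exact ⟨fun hxy : g x = y => hxy ▸ hg x, fun hxy => (hg_unique x y hxy).symm⟩
  have hgN : ∀ x, g x = x ∨ (x, g x) ∈ N := fun x => (hg x).symm.imp_left fun h => h.2.symm
  refine ⟨g, measurable_of_measurableSet_graph (hgraph ▸ hΓm), fun x => ?_,
    fun p hp => (hg_unique p.1 p.2 (.inl hp)).symm, hgN⟩
  obtain hx | hx := hgN x
  · rw [hx, hx]
  · exact (hg_unique (g x) x (.inl (hsymm _ hx))).symm

lemma IsBorelMatching.exists_measurable_involutive {M : Set (X × X)} (hM : IsBorelMatching M) :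
    ∃ g : X → X, Measurable g ∧ Involutive g ∧ (∀ p ∈ M, g p.1 = p.2) ∧
      ∀ x, g x = x ∨ (x, g x) ∈ M ∨ (g x, x) ∈ M := by
  obtain ⟨g, hgm, hginv, hgM, hg⟩ := exists_measurable_involutive_of_symmetric
    (N := M ∪ Prod.swap ⁻¹' M) (hM.measurableSet.union (measurable_swap hM.measurableSet))
    (fun p hp => hp.symm) hM.injOn_fst_union_swap
  exact ⟨g, hgm, hginv, fun p hp => hgM p (.inl hp), hg⟩

lemma exists_countable_isBorelMatching_cover {R : Set (X × X)} (hR : MeasurableSet R)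
    (hfst : ∀ x, {y | (x, y) ∈ R}.Countable) (hsnd : ∀ y, {x | (x, y) ∈ R}.Countable) :
    ∃ 𝓜 : Set (Set (X × X)), 𝓜.Countable ∧ (∀ M ∈ 𝓜, IsBorelMatching M ∧ M ⊆ R) ∧
      ∀ p ∈ R, p.1 ≠ p.2 → p ∈ ⋃₀ 𝓜 := by
  obtain ⟨E, hEc, hE, hRE⟩ := sigmaInjOn_of_countable_fibers measurable_fst hR fun x =>
    ((hfst x).image (x, ·)).mono <| by rintro ⟨_, y⟩ ⟨hp, rfl⟩; exact ⟨y, hp, rfl⟩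
  obtain ⟨F, hFc, hF, hRF⟩ := sigmaInjOn_of_countable_fibers measurable_snd hR fun y =>
    ((hsnd y).image (·, y)).mono <| by rintro ⟨x, _⟩ ⟨hp, rfl⟩; exact ⟨x, hp, rfl⟩
  obtain ⟨c, hcm, hc⟩ := MeasurableSpace.measurable_injection_nat_bool_of_countablySeparated X
  have := hEc.to_subtype
  have := hFc.to_subtype
  let halfspace (n : ℕ) (b : Bool) : Set X := {x | c x n = b}
  have hhalf (n : ℕ) (b : Bool) : MeasurableSet (halfspace n b) :=
    (measurable_pi_apply n).comp hcm (measurableSet_singleton b)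
  let M (i : E × F × ℕ × Bool) : Set (X × X) :=
    R ∩ (i.1 ∩ i.2.1) ∩ halfspace i.2.2.1 i.2.2.2 ×ˢ (halfspace i.2.2.1 i.2.2.2)ᶜ
  refine ⟨range M, countable_range M, ?_, fun p hp hne => ?_⟩
  · rintro _ ⟨⟨e, f, n, b⟩, rfl⟩
    refine ⟨⟨?_, ?_, ?_, ?_⟩, fun p hp => hp.1.1⟩
    · exact (hR.inter ((hE e e.2).1.inter (hF f f.2).1)).inter ((hhalf n b).prod (hhalf n b).compl)
    · exact (hE e e.2).2.mono fun p hp => hp.1.2.1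
    · exact (hF f f.2).2.mono fun p hp => hp.1.2.2
    · rw [disjoint_left]
      rintro _ ⟨p, hp, rfl⟩ ⟨q, hq, hqp⟩
      exact hq.2.2 (hqp ▸ hp.2.1)
  · obtain ⟨e, he, hpe⟩ := hRE hp
    obtain ⟨f, hf, hpf⟩ := hRF hp
    obtain ⟨n, hn⟩ := Function.ne_iff.1 (hc.ne hne)
    exact ⟨_, ⟨(⟨e, he⟩, ⟨f, hf⟩, n, c p.1 n), rfl⟩, ⟨hp, hpe, hpf⟩, rfl, hn.symm⟩

end BorelMatching

section FullGroup

variable {X : Type*} [MeasurableSpace X]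

/-- The full group `[R]` of an equivalence relation `R`: the Borel automorphisms of the space that
map every point to an equivalent one. -/
def fullGroup (R : Setoid X) : Subgroup (Equiv.Perm X) where
  carrier := {g | Measurable g ∧ Measurable g.symm ∧ ∀ x, R x (g x)}
  one_mem' := ⟨measurable_id, measurable_id, R.refl⟩
  mul_mem' := fun {g h} hg hh =>
    ⟨hg.1.comp hh.1, hh.2.1.comp hg.2.1, fun x => R.trans (hh.2.2 x) (hg.2.2 (h x))⟩
  inv_mem' := fun {g} hg =>
    ⟨hg.2.1, hg.1, fun x => by simpa using R.symm (hg.2.2 (g.symm x))⟩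

lemma exists_countable_subset_fullGroup [StandardBorelSpace X] (R : Setoid X)
    (hR : MeasurableSet {p : X × X | R p.1 p.2}) (hcount : ∀ x, {y | R x y}.Countable) :
    ∃ S ⊆ (fullGroup R : Set (Equiv.Perm X)), S.Countable ∧
      ∀ x y, R x y → ∃ g ∈ S, g x = y := by
  obtain ⟨𝓜, h𝓜c, h𝓜, hcover⟩ := exists_countable_isBorelMatching_cover hR hcount fun y =>
    (hcount y).mono fun x hx => R.symm hx
  have hext : ∀ M : 𝓜, ∃ g ∈ fullGroup R, ∀ p ∈ M.1, g p.1 = p.2 := fun M => by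
    obtain ⟨hM, hMR⟩ := h𝓜 M M.2
    obtain ⟨g, hgm, hginv, hgM, hg⟩ := hM.exists_measurable_involutive
    refine ⟨hginv.toPerm, ⟨hgm, hgm, fun x => ?_⟩, hgM⟩
    obtain hx | hx | hx := hg x
    · exact (congrArg (R x) hx).mpr (R.refl x)
    · exact hMR hx
    · exact R.symm (hMR hx)
  choose g hg hgM using hext
  have := h𝓜c.to_subtype
  refine ⟨insert 1 (range g), insert_subset (one_mem _) (range_subset_iff.2 hg),
    (countable_range g).insert 1, fun x y hxy => ?_⟩
  obtain rfl | hne := eq_or_ne x y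
  · exact ⟨1, mem_insert _ _, rfl⟩
  · obtain ⟨M, hM, hxyM⟩ := hcover (x, y) hxy hne
    exact ⟨g ⟨M, hM⟩, .inr (mem_range_self _), hgM ⟨M, hM⟩ (x, y) hxyM⟩

end FullGroup

lemma countable_subgroupClosure {G : Type*} [Group G] {S : Set G} (hS : S.Countable) :
    Countable (Subgroup.closure S) := by
  have := hS.to_subtype
  rw [FreeGroup.closure_eq_range]
  exact (countable_range _).to_subtype

theorem feldman_moore_general {X : Type*} [MeasurableSpace X] [StandardBorelSpace X]
    (r : X → X → Prop) (hr : Equivalence r)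
    (hBorel : MeasurableSet {p : X × X | r p.1 p.2})
    (hcount : ∀ x : X, {y : X | r x y}.Countable) :
    ∃ G : Subgroup (Equiv.Perm X), Countable G ∧ (∀ g ∈ G, Measurable g) ∧
      ∀ x y, r x y ↔ ∃ g ∈ G, g x = y := by
  obtain ⟨S, hS, hSc, hSr⟩ := exists_countable_subset_fullGroup ⟨r, hr⟩ hBorel hcount
  have hG : Subgroup.closure S ≤ fullGroup ⟨r, hr⟩ := (Subgroup.closure_le _).2 hS
  refine ⟨Subgroup.closure S, countable_subgroupClosure hSc, fun g hg => (hG hg).1,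
    fun x y => ⟨fun hxy => ?_, ?_⟩⟩
  · obtain ⟨g, hg, hgxy⟩ := hSr x y hxy
    exact ⟨g, Subgroup.subset_closure hg, hgxy⟩
  · rintro ⟨g, hg, rfl⟩
    exact (hG hg).2.2 x

/-- **Feldman–Moore theorem**: every countable Borel equivalence relation on a standard
Borel space is the orbit equivalence relation of a Borel action of a countable group. -/
theorem feldman_moore {X : Type} [MeasurableSpace X] [StandardBorelSpace X]
    (r : X → X → Prop) (hr : Equivalence r)
    (hBorel : MeasurableSet {p : X × X | r p.1 p.2})
    (hcount : ∀ x : X, {y : X | r x y}.Countable) :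
    ∃ (G : Type) (_ : Group G) (_ : Countable G) (act : G → X → X),
      (∀ g : G, Measurable (act g)) ∧
      (∀ x : X, act 1 x = x) ∧
      (∀ (g h : G) (x : X), act (g * h) x = act g (act h x)) ∧
      (∀ x y : X, r x y ↔ ∃ g : G, act g x = y) := by
  obtain ⟨G, hG, hGm, hGr⟩ := feldman_moore_general r hr hBorel hcount
  exact ⟨G, inferInstance, hG, fun g => g.1, fun g => hGm g g.2, fun _ => rfl, fun _ _ _ => rfl,
    fun x y => by simpa using hGr x y⟩
end
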